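/- arXiv:2201.04514 — 2 statements merged into one kernel-verified Lean document; each statement's English description precedes it below -/
import Mathlib

section
/- (Uniform moment bounds for the equilibrium fluctuation field; static version of Proposition 2.3, estimate (7.2).) Let d ≥ 2. For every integer p ≥ 1 there exists a constant C_p > 0, depending only on p and d, such that for all sufficiently small ε > 0 and every bounded measurable h : 𝕋^d × ℝ^d → ℝ, | 𝔼^eq_ε[ (ζ^{ε,eq}(h))^p ] | ≤ C_p ‖h‖_{L^∞}^p. -/
open MeasureTheory Real

noncomputable section

/-- The unit `d`-dimensional torus. -/
abbrev Torus (d : ℕ) := Fin d → AddCircle (1 : ℝ)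

/-- The one-particle phase space `𝕋^d × ℝ^d`. -/
abbrev Phase (d : ℕ) := Torus d × EuclideanSpace ℝ (Fin d)

/-- The flat (Euclidean) distance on the torus. -/
noncomputable def torusDist {d : ℕ} (x y : Torus d) : ℝ :=
  Real.sqrt (∑ i, dist (x i) (y i) ^ 2)

/-- The Maxwellian `𝓜(v) = (2π)^{-d/2} exp(-|v|²/2)`. -/
noncomputable def maxwellian {d : ℕ} (v : EuclideanSpace ℝ (Fin d)) : ℝ :=
  (2 * π) ^ (-(d : ℝ) / 2) * Real.exp (-‖v‖ ^ 2 / 2)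

/- The hard-sphere exclusion indicator `1_{𝒟^ε_N}` (as a function of the positions). -/
open Classical in
noncomputable def exclInd {d : ℕ} (ε : ℝ) {N : ℕ} (X : Fin N → Torus d) : ℝ :=
  if ∀ i j : Fin N, i ≠ j → ε < torusDist (X i) (X j) then 1 else 0

/-- The Boltzmann–Grad scaling factor `μ_ε = ε^{-(d-1)}`. -/
noncomputable def muBG (d : ℕ) (ε : ℝ) : ℝ := (ε ^ (d - 1))⁻¹

/-- The grand canonical partition function
`𝒵^ε = ∑_N (μ_ε^N / N!) ∫ ∏_{i≠j} 1_{|x_i - x_j| > ε} dX_N` (the `N = 0` term equals `1`). -/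
noncomputable def partitionZ (d : ℕ) (ε : ℝ) : ℝ :=
  ∑' N : ℕ, muBG d ε ^ N / (Nat.factorial N : ℝ) * ∫ X : Fin N → Torus d, exclInd ε X

/-- The grand canonical equilibrium expectation of a functional
`F : ⨆_N (𝕋^d × ℝ^d)^N → ℝ`. -/
noncomputable def gceExp (d : ℕ) (ε : ℝ) (F : (N : ℕ) → (Fin N → Phase d) → ℝ) : ℝ :=
  (partitionZ d ε)⁻¹ *
    ∑' N : ℕ, muBG d ε ^ N / (Nat.factorial N : ℝ) *
      ∫ Z : Fin N → Phase d,
        exclInd ε (fun i => (Z i).1) * (∏ i, maxwellian (Z i).2) * F N Z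

/-- The empirical density `π^ε(h) = μ_ε^{-1} ∑_i h(z_i)`. -/
noncomputable def empDens {d : ℕ} (ε : ℝ) (h : Phase d → ℝ) (N : ℕ)
    (Z : Fin N → Phase d) : ℝ :=
  (muBG d ε)⁻¹ * ∑ i, h (Z i)

/-- The equilibrium fluctuation field `ζ^{ε,eq}(h) = √μ_ε (π ^ε(h) - 𝔼^eq_ε[π^ε(h)])`. -/
noncomputable def fluctField (d : ℕ) (ε : ℝ) (h : Phase d → ℝ) (N : ℕ)
    (Z : Fin N → Phase d) : ℝ :=
  Real.sqrt (muBG d ε) * (empDens ε h N Z - gceExp d ε (fun M W => empDens ε h M W))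

end

set_option linter.unusedSectionVars false

namespace HC

open Classical in
noncomputable def ex {E : Type*} (A : E → E → Prop) {N : ℕ} (Z : Fin N → E) : ℝ :=
  if ∀ i j : Fin N, i ≠ j → A (Z i) (Z j) then 1 else 0

open Classical in
noncomputable def kk {E : Type*} (A : E → E → Prop) (x y : E) : ℝ := if A x y then 1 else 0

section
variable {E : Type*} [MeasurableSpace E] (P : Measure E) [IsProbabilityMeasure P]
  (A : E → E → Prop)

noncomputable def T (N : ℕ) (φ : E → ℝ) : ℝ :=
  ∫ Z : Fin N → E, ex A Z * ∏ i, φ (Z i) ∂(Measure.pi fun _ => P)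

noncomputable def Zf (φ : E → ℝ) : ℝ := ∑' N : ℕ, T P A N φ / (Nat.factorial N : ℝ)

lemma ex_nonneg {N : ℕ} (Z : Fin N → E) : 0 ≤ ex A Z := by unfold ex; split_ifs <;> norm_num
lemma ex_le {N : ℕ} (Z : Fin N → E) : ex A Z ≤ 1 := by unfold ex; split_ifs <;> norm_num
lemma ex_abs {N : ℕ} (Z : Fin N → E) : |ex A Z| ≤ 1 := by
  rw [abs_of_nonneg (ex_nonneg A Z)]; exact ex_le A Z
lemma kk_nonneg (x y : E) : 0 ≤ kk A x y := by unfold kk; split_ifs <;> norm_num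
lemma kk_le (x y : E) : kk A x y ≤ 1 := by unfold kk; split_ifs <;> norm_num
lemma kk_abs (x y : E) : |kk A x y| ≤ 1 := by
  rw [abs_of_nonneg (kk_nonneg A x y)]; exact kk_le A x y

variable {A}

lemma meas_ex (hA : MeasurableSet {p : E × E | A p.1 p.2}) (N : ℕ) :
    Measurable (fun Z : Fin N → E => ex A Z) := by
  unfold ex
  refine Measurable.ite ?_ measurable_const measurable_const
  simp only [Set.ofPred_forall]
  refine MeasurableSet.iInter fun i => MeasurableSet.iInter fun j => MeasurableSet.iInter fun _ => ?_
  exact (show Measurable (fun Z : Fin N → E => (Z i, Z j)) by fun_prop) hA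

lemma meas_kk2 (hA : MeasurableSet {p : E × E | A p.1 p.2}) :
    Measurable (fun p : E × E => kk A p.1 p.2) := by
  unfold kk
  exact Measurable.ite hA measurable_const measurable_const

lemma meas_kk (hA : MeasurableSet {p : E × E | A p.1 p.2}) (x : E) :
    Measurable (fun y => kk A x y) :=
  (meas_kk2 hA).comp (measurable_const.prodMk measurable_id)

lemma prod_abs_le {N : ℕ} {φ : E → ℝ} {M : ℝ} (h : ∀ z, |φ z| ≤ M) (Z : Fin N → E) :
    |∏ i, φ (Z i)| ≤ M ^ N := by
  rw [Finset.abs_prod]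
  calc ∏ i, |φ (Z i)| ≤ ∏ _i : Fin N, M :=
        Finset.prod_le_prod (fun _ _ => abs_nonneg _) (fun _ _ => h _)
    _ = M ^ N := by simp

lemma int_T (hA : MeasurableSet {p : E × E | A p.1 p.2}) {φ : E → ℝ} (hφ : Measurable φ) {M : ℝ}
    (h : ∀ z, |φ z| ≤ M) (N : ℕ) :
    Integrable (fun Z : Fin N → E => ex A Z * ∏ i, φ (Z i)) (Measure.pi fun _ => P) := by
  refine Integrable.of_bound (C := M ^ N) ?_ (Filter.Eventually.of_forall fun Z => ?_)
  · exact ((meas_ex hA N).mul (by fun_prop)).aestronglyMeasurable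
  · rw [Real.norm_eq_abs, abs_mul]
    calc _ ≤ 1 * M ^ N := mul_le_mul (ex_abs A Z) (prod_abs_le h Z) (abs_nonneg _) zero_le_one
      _ = _ := one_mul _

lemma T_abs {φ : E → ℝ} {M : ℝ} (h : ∀ z, |φ z| ≤ M) (N : ℕ) : |T P A N φ| ≤ M ^ N := by
  have := norm_integral_le_of_norm_le_const (μ := Measure.pi fun _ : Fin N => P) (C := M ^ N)
    (f := fun Z : Fin N → E => ex A Z * ∏ i, φ (Z i)) (Filter.Eventually.of_forall fun Z => by
      rw [Real.norm_eq_abs, abs_mul]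
      calc _ ≤ 1 * M ^ N := mul_le_mul (ex_abs A Z) (prod_abs_le h Z) (abs_nonneg _) zero_le_one
        _ = _ := one_mul _)
  simpa [T] using this

lemma T_term_abs {φ : E → ℝ} {M : ℝ} (h : ∀ z, |φ z| ≤ M) (N : ℕ) :
    |T P A N φ / (Nat.factorial N : ℝ)| ≤ M ^ N / (Nat.factorial N : ℝ) := by
  rw [abs_div, Nat.abs_cast]
  exact div_le_div_of_nonneg_right (T_abs P h N) (by positivity)

lemma summ_T {φ : E → ℝ} {M : ℝ} (h : ∀ z, |φ z| ≤ M) :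
    Summable (fun N : ℕ => T P A N φ / (Nat.factorial N : ℝ)) :=
  Summable.of_norm_bounded (Real.summable_pow_div_factorial M) (fun N => T_term_abs P h N)

lemma Zf_le {φ : E → ℝ} {M : ℝ} (h : ∀ z, |φ z| ≤ M) : Zf P A φ ≤ Real.exp M := by
  have hs := Real.summable_pow_div_factorial M
  rw [Real.exp_eq_exp_ℝ, NormedSpace.exp_eq_tsum_div]
  exact (summ_T P h).tsum_le_tsum (fun N => (le_abs_self _).trans (T_term_abs P h N)) hs

lemma T_mono (hA : MeasurableSet {p : E × E | A p.1 p.2}) {φ ψ : E → ℝ} (hφ : Measurable φ)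
    (hψ : Measurable ψ) {M : ℝ} (h0 : ∀ z, 0 ≤ φ z) (h1 : ∀ z, φ z ≤ ψ z) (h2 : ∀ z, ψ z ≤ M)
    (N : ℕ) : T P A N φ ≤ T P A N ψ := by
  refine integral_mono (int_T P hA hφ (M := M) (fun z => ?_) N)
    (int_T P hA hψ (M := M) (fun z => ?_) N) (fun Z => ?_)
  · rw [abs_of_nonneg (h0 z)]; exact (h1 z).trans (h2 z)
  · rw [abs_of_nonneg ((h0 z).trans (h1 z))]; exact h2 z
  · exact mul_le_mul_of_nonneg_left
      (Finset.prod_le_prod (fun _ _ => h0 _) (fun _ _ => h1 _)) (ex_nonneg A Z)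

lemma Zf_mono (hA : MeasurableSet {p : E × E | A p.1 p.2}) {φ ψ : E → ℝ} (hφ : Measurable φ)
    (hψ : Measurable ψ) {M : ℝ} (h0 : ∀ z, 0 ≤ φ z) (h1 : ∀ z, φ z ≤ ψ z) (h2 : ∀ z, ψ z ≤ M) :
    Zf P A φ ≤ Zf P A ψ := by
  refine (summ_T P (M := M) fun z => ?_).tsum_le_tsum (fun N => ?_) (summ_T P (M := M) fun z => ?_)
  · rw [abs_of_nonneg (h0 z)]; exact (h1 z).trans (h2 z)
  · exact div_le_div_of_nonneg_right (T_mono P hA hφ hψ h0 h1 h2 N) (by positivity)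
  · rw [abs_of_nonneg ((h0 z).trans (h1 z))]; exact h2 z

lemma T_nonneg {φ : E → ℝ} (h0 : ∀ z, 0 ≤ φ z) (N : ℕ) : 0 ≤ T P A N φ :=
  integral_nonneg fun Z => mul_nonneg (ex_nonneg A Z) (Finset.prod_nonneg fun _ _ => h0 _)

lemma one_le_Zf {φ : E → ℝ} {M : ℝ} (h0 : ∀ z, 0 ≤ φ z) (h2 : ∀ z, φ z ≤ M) :
    1 ≤ Zf P A φ := by
  have h := (summ_T P (A := A) (φ := φ) (M := M) fun z => by
    rw [abs_of_nonneg (h0 z)]; exact h2 z).le_tsum 0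
      (fun N _ => div_nonneg (T_nonneg P h0 N) (by positivity))
  have h3 : T P A 0 φ / (Nat.factorial 0 : ℝ) = 1 := by simp [T, ex]
  rw [h3] at h
  exact h

lemma ex_split (hsym : ∀ x y, A x y → A y x) {N : ℕ} (i : Fin (N + 1)) (Z : Fin (N + 1) → E) :
    ex A Z = ex A (fun j => Z (i.succAbove j)) * ∏ j, kk A (Z i) (Z (i.succAbove j)) := by
  by_cases h : ∀ a b : Fin (N + 1), a ≠ b → A (Z a) (Z b)
  · have h1 : ex A Z = 1 := by unfold ex; rw [if_pos h]
    have h2 : ex A (fun j => Z (i.succAbove j)) = 1 := by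
      unfold ex; rw [if_pos]
      intro a b hab
      exact h _ _ (fun e => hab (Fin.succAbove_right_injective e))
    have h3 : ∀ j, kk A (Z i) (Z (i.succAbove j)) = 1 := by
      intro j; unfold kk; rw [if_pos]
      exact h _ _ (Fin.succAbove_ne i j).symm
    rw [h1, h2]; simp [h3]
  · have h1 : ex A Z = 0 := by unfold ex; rw [if_neg h]
    rw [h1]; symm
    by_contra hne
    obtain ⟨ha, hb⟩ := mul_ne_zero_iff.1 hne
    apply h
    have ha' : ∀ a b : Fin N, a ≠ b → A (Z (i.succAbove a)) (Z (i.succAbove b)) := by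
      by_contra hc; apply ha; unfold ex; rw [if_neg hc]
    have hb' : ∀ j, A (Z i) (Z (i.succAbove j)) := by
      intro j
      have := Finset.prod_ne_zero_iff.1 hb j (Finset.mem_univ _)
      by_contra hc; apply this; unfold kk; rw [if_neg hc]
    intro a b hab
    rcases Fin.eq_self_or_eq_succAbove i a with rfl | ⟨a', rfl⟩
    · rcases Fin.eq_self_or_eq_succAbove a b with rfl | ⟨b', rfl⟩
      · exact absurd rfl hab
      · exact hb' _
    · rcases Fin.eq_self_or_eq_succAbove i b with rfl | ⟨b', rfl⟩
      · exact hsym _ _ (hb' _)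
      · exact ha' _ _ (fun e => hab (by rw [e]))

lemma meas_Tk (hA : MeasurableSet {p : E × E | A p.1 p.2}) {φ : E → ℝ} (hφ : Measurable φ) (N : ℕ) :
    StronglyMeasurable (fun x => T P A N (fun y => φ y * kk A x y)) := by
  unfold T
  refine StronglyMeasurable.integral_prod_right
    (f := fun x (Z : Fin N → E) => ex A Z * ∏ i, (φ (Z i) * kk A x (Z i))) ?_
  refine Measurable.stronglyMeasurable ?_
  refine ((meas_ex hA N).comp measurable_snd).mul ?_
  refine Finset.measurable_fun_prod _ fun i _ => ?_
  refine Measurable.mul (by fun_prop) ?_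
  exact (meas_kk2 hA).comp
    (show Measurable (fun p : E × (Fin N → E) => (p.1, p.2 i)) by fun_prop)

lemma abs_mul_kk {φ : E → ℝ} {M : ℝ} (h : ∀ z, |φ z| ≤ M) (x y : E) : |φ y * kk A x y| ≤ M := by
  rw [abs_mul]
  have h0 : 0 ≤ M := (abs_nonneg _).trans (h y)
  calc _ ≤ M * 1 := mul_le_mul (h y) (kk_abs A x y) (abs_nonneg _) h0
    _ = M := mul_one _

lemma lemI (hA : MeasurableSet {p : E × E | A p.1 p.2}) (hsym : ∀ x y, A x y → A y x)
    {φ ψ : E → ℝ} (hφ : Measurable φ) (hψ : Measurable ψ) {M : ℝ} (h1 : ∀ z, |φ z| ≤ M)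
    (h2 : ∀ z, |ψ z| ≤ M) (N : ℕ) (i : Fin (N + 1)) :
    ∫ Z : Fin (N + 1) → E, ex A Z * (ψ (Z i) * ∏ j, φ (Z (i.succAbove j))) ∂(Measure.pi fun _ => P)
      = ∫ x, ψ x * T P A N (fun y => φ y * kk A x y) ∂P := by
  have mp := measurePreserving_piFinSuccAbove (fun _ : Fin (N + 1) => P) i
  let g : E × (Fin N → E) → ℝ := fun q =>
    (ex A q.2 * ∏ j, kk A q.1 (q.2 j)) * (ψ q.1 * ∏ j, φ (q.2 j))
  have hkm : Measurable (fun q : E × (Fin N → E) => ∏ j, kk A q.1 (q.2 j)) := by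
    refine Finset.measurable_fun_prod _ fun i _ => ?_
    exact (meas_kk2 hA).comp
      (show Measurable (fun p : E × (Fin N → E) => (p.1, p.2 i)) by fun_prop)
  have hgm : Measurable g := by
    refine Measurable.mul (((meas_ex hA N).comp measurable_snd).mul hkm) (by fun_prop)
  have hgi : Integrable g (P.prod (Measure.pi fun _ : Fin N => P)) := by
    refine Integrable.of_bound (C := (1 * 1 ^ N) * (M * M ^ N)) hgm.aestronglyMeasurable
      (Filter.Eventually.of_forall fun q => ?_)
    rw [Real.norm_eq_abs, abs_mul, abs_mul, abs_mul]
    have hM : 0 ≤ M := (abs_nonneg _).trans (h1 q.1)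
    exact mul_le_mul (mul_le_mul (ex_abs A _) (prod_abs_le (fun z => kk_abs A q.1 z) q.2)
      (abs_nonneg _) zero_le_one) (mul_le_mul (h2 _) (prod_abs_le h1 q.2) (abs_nonneg _) hM)
      (by positivity) (by positivity)
  have e1 : ∀ Z : Fin (N + 1) → E, ex A Z * (ψ (Z i) * ∏ j, φ (Z (i.succAbove j)))
      = g (MeasurableEquiv.piFinSuccAbove (fun _ => E) i Z) := by
    intro Z
    rw [ex_split hsym i Z]
    rfl
  simp_rw [e1]
  rw [mp.integral_comp', integral_prod _ hgi]
  refine integral_congr_ae (Filter.Eventually.of_forall fun x => ?_)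
  simp only [T, g]
  rw [← integral_const_mul]
  refine integral_congr_ae (Filter.Eventually.of_forall fun Z => ?_)
  simp only [Finset.prod_mul_distrib]
  ring

lemma bd_path {φ ψ : E → ℝ} {M R : ℝ} (h1 : ∀ z, |φ z| ≤ M)
    (h2 : ∀ z, |ψ z| ≤ M) {s : ℝ} (hs : |s| ≤ R) (z : E) : |φ z + s * ψ z| ≤ M + R * M := by
  calc _ ≤ |φ z| + |s * ψ z| := abs_add_le _ _
    _ ≤ M + R * M := by
      rw [abs_mul]
      exact add_le_add (h1 z) (mul_le_mul hs (h2 z) (abs_nonneg _) ((abs_nonneg _).trans hs))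

lemma hasDeriv_prod {N : ℕ} (φ ψ : E → ℝ) (Z : Fin (N + 1) → E) (s : ℝ) :
    HasDerivAt (fun s => ∏ i, (φ (Z i) + s * ψ (Z i)))
      (∑ i, ψ (Z i) * ∏ j, (φ (Z (i.succAbove j)) + s * ψ (Z (i.succAbove j)))) s := by
  have h := HasDerivAt.fun_finsetProd (u := Finset.univ) (f := fun (i : Fin (N + 1)) s => φ (Z i) + s * ψ (Z i))
    (f' := fun i => ψ (Z i)) (x := s) (fun i _ => by
      simpa using ((hasDerivAt_id s).mul_const (ψ (Z i))).const_add (φ (Z i)))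
  convert! h using 1
  refine Finset.sum_congr rfl fun i _ => ?_
  rw [smul_eq_mul, mul_comm, ← Finset.compl_singleton, ← Fin.image_succAbove_univ,
    Finset.prod_image (fun a _ b _ hab => Fin.succAbove_right_injective hab)]

lemma int_term (hA : MeasurableSet {p : E × E | A p.1 p.2})
    {φ ψ : E → ℝ} (hφ : Measurable φ) (hψ : Measurable ψ) {M M' : ℝ} (h1 : ∀ z, |φ z| ≤ M)
    (h2 : ∀ z, |ψ z| ≤ M') (N : ℕ) (i : Fin (N + 1)) :
    Integrable (fun Z : Fin (N + 1) → E => ex A Z * (ψ (Z i) * ∏ j, φ (Z (i.succAbove j))))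
      (Measure.pi fun _ => P) := by
  refine Integrable.of_bound (C := 1 * (M' * M ^ N)) ?_ (Filter.Eventually.of_forall fun Z => ?_)
  · exact ((meas_ex hA _).mul (by fun_prop)).aestronglyMeasurable
  · rw [Real.norm_eq_abs, abs_mul, abs_mul]
    have hM : 0 ≤ M' := (abs_nonneg _).trans (h2 (Z i))
    exact mul_le_mul (ex_abs A Z) (mul_le_mul (h2 _)
      (prod_abs_le h1 (fun j => Z (i.succAbove j))) (abs_nonneg _) hM) (by positivity) zero_le_one

lemma sum_term (hA : MeasurableSet {p : E × E | A p.1 p.2}) (hsym : ∀ x y, A x y → A y x)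
    {φ ψ : E → ℝ} (hφ : Measurable φ) (hψ : Measurable ψ) {M : ℝ} (h1 : ∀ z, |φ z| ≤ M)
    (h2 : ∀ z, |ψ z| ≤ M) (N : ℕ) :
    ∫ Z : Fin (N + 1) → E, ex A Z * ∑ i, (ψ (Z i) * ∏ j, φ (Z (i.succAbove j)))
      ∂(Measure.pi fun _ => P)
      = (N + 1 : ℝ) * ∫ x, ψ x * T P A N (fun y => φ y * kk A x y) ∂P := by
  simp_rw [Finset.mul_sum]
  rw [integral_finsetSum _ (fun i _ => int_term P hA hφ hψ h1 h2 N i)]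
  simp_rw [lemI P hA hsym hφ hψ h1 h2 N]
  simp

lemma derT (hA : MeasurableSet {p : E × E | A p.1 p.2}) (hsym : ∀ x y, A x y → A y x)
    {φ ψ : E → ℝ} (hφ : Measurable φ) (hψ : Measurable ψ) {M : ℝ} (hM : 0 ≤ M)
    (h1 : ∀ z, |φ z| ≤ M) (h2 : ∀ z, |ψ z| ≤ M) (N : ℕ) (s : ℝ) :
    HasDerivAt (fun s => T P A (N + 1) (fun z => φ z + s * ψ z))
      ((N + 1 : ℝ) * ∫ x, ψ x * T P A N (fun y => (φ y + s * ψ y) * kk A x y) ∂P) s := by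
  have hb : ∀ t, |t| ≤ |s| + 1 → ∀ z, |φ z + t * ψ z| ≤ M + (|s| + 1) * M :=
    fun t ht z => bd_path h1 h2 ht z
  have hm : ∀ t : ℝ, Measurable (fun z => φ z + t * ψ z) := fun t => by fun_prop
  have h2' : ∀ z, |ψ z| ≤ M + (|s| + 1) * M := fun z => (h2 z).trans (by
    have : 0 ≤ (|s| + 1) * M := by positivity
    linarith)
  rw [← sum_term P hA hsym (hm s) hψ (hb s (by linarith)) h2' N]
  refine (hasDerivAt_integral_of_dominated_loc_of_deriv_le
    (F := fun s (Z : Fin (N + 1) → E) => ex A Z * ∏ i, (φ (Z i) + s * ψ (Z i)))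
    (F' := fun s (Z : Fin (N + 1) → E) =>
      ex A Z * ∑ i, (ψ (Z i) * ∏ j, (φ (Z (i.succAbove j)) + s * ψ (Z (i.succAbove j)))))
    (bound := fun _ => 1 * ∑ _i : Fin (N + 1), (M * (M + (|s| + 1) * M) ^ N))
    (s := Metric.ball s 1) (Metric.ball_mem_nhds s one_pos) ?_ ?_ ?_ ?_ ?_ ?_).2
  · exact Filter.Eventually.of_forall fun t =>
      ((meas_ex hA _).mul (by fun_prop)).aestronglyMeasurable
  · exact int_T P hA (hm s) (hb s (by linarith)) (N + 1)
  · exact ((meas_ex hA _).mul (by fun_prop)).aestronglyMeasurable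
  · refine Filter.Eventually.of_forall fun Z t ht => ?_
    have ht' : |t| ≤ |s| + 1 := by
      rw [Metric.mem_ball, Real.dist_eq] at ht
      have := abs_sub_abs_le_abs_sub t s
      linarith
    rw [Real.norm_eq_abs, abs_mul]
    refine mul_le_mul (ex_abs A Z) ?_ (abs_nonneg _) zero_le_one
    refine (Finset.abs_sum_le_sum_abs _ _).trans (Finset.sum_le_sum fun i _ => ?_)
    rw [abs_mul]
    exact mul_le_mul (h2 _) (prod_abs_le (hb t ht') (fun j => Z (i.succAbove j)))
      (abs_nonneg _) hM
  · exact integrable_const _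
  · refine Filter.Eventually.of_forall fun Z t _ => ?_
    exact (hasDeriv_prod φ ψ Z t).const_mul (ex A Z)

lemma T_zero (φ : E → ℝ) : T P A 0 φ = 1 := by simp [T, ex]

lemma Zf_shift {φ : E → ℝ} {M : ℝ} (h : ∀ z, |φ z| ≤ M) :
    Zf P A φ = 1 + ∑' N : ℕ, T P A (N + 1) φ / (Nat.factorial (N + 1) : ℝ) := by
  unfold Zf
  rw [(summ_T P h).tsum_eq_zero_add, T_zero]
  simp

lemma hasSum_U (hA : MeasurableSet {p : E × E | A p.1 p.2})
    {φ ψ : E → ℝ} (hφ : Measurable φ) (hψ : Measurable ψ) {M : ℝ}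
    (h1 : ∀ z, |φ z| ≤ M) (h2 : ∀ z, |ψ z| ≤ M) :
    HasSum (fun N : ℕ => (N + 1 : ℝ) * (∫ x, ψ x * T P A N (fun y => φ y * kk A x y) ∂P)
      / (Nat.factorial (N + 1) : ℝ)) (∫ x, ψ x * Zf P A (fun y => φ y * kk A x y) ∂P) := by
  have hbd : ∀ N x, |ψ x * T P A N (fun y => φ y * kk A x y) / (Nat.factorial N : ℝ)|
      ≤ M * (M ^ N / (Nat.factorial N : ℝ)) := by
    intro N x
    rw [mul_div_assoc, abs_mul]
    exact mul_le_mul (h2 x) (T_term_abs P (abs_mul_kk h1 x) N) (abs_nonneg _)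
      ((abs_nonneg _).trans (h2 x))
  have hint : ∀ N : ℕ, Integrable
      (fun x => ψ x * T P A N (fun y => φ y * kk A x y) / (Nat.factorial N : ℝ)) P := by
    intro N
    refine Integrable.of_bound (C := M * (M ^ N / (Nat.factorial N : ℝ))) ?_
      (Filter.Eventually.of_forall (hbd N))
    exact ((hψ.mul (meas_Tk P hA hφ N).measurable).div_const _).aestronglyMeasurable
  have := hasSum_integral_of_summable_integral_norm hint (by
    refine Summable.of_nonneg_of_le (fun N => integral_nonneg fun _ => norm_nonneg _)
      (fun N => ?_) ((Real.summable_pow_div_factorial M).mul_left M)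
    have := integral_mono (hint N).norm (integrable_const (μ := P) (M * (M ^ N / (Nat.factorial N : ℝ))))
      (hbd N)
    simpa using this)
  convert! this using 1
  · funext N
    rw [integral_div, Nat.factorial_succ]
    push_cast
    have : (N + 1 : ℝ) ≠ 0 := by positivity
    field_simp
  · refine integral_congr_ae (Filter.Eventually.of_forall fun x => ?_)
    simp only [Zf, mul_div_assoc]
    rw [tsum_mul_left]

lemma lemII (hA : MeasurableSet {p : E × E | A p.1 p.2}) (hsym : ∀ x y, A x y → A y x)
    {φ ψ : E → ℝ} (hφ : Measurable φ) (hψ : Measurable ψ) {M : ℝ} (hM : 0 ≤ M)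
    (h1 : ∀ z, |φ z| ≤ M) (h2 : ∀ z, |ψ z| ≤ M) (s : ℝ) :
    HasDerivAt (fun s => Zf P A (fun z => φ z + s * ψ z))
      (∫ x, ψ x * Zf P A (fun y => (φ y + s * ψ y) * kk A x y) ∂P) s := by
  have hb : ∀ t, |t| ≤ |s| + 1 → ∀ z, |φ z + t * ψ z| ≤ M + (|s| + 1) * M :=
    fun t ht z => bd_path h1 h2 ht z
  have hm : ∀ t : ℝ, Measurable (fun z => φ z + t * ψ z) := fun t => by fun_prop
  have h2' : ∀ z, |ψ z| ≤ M + (|s| + 1) * M := fun z => (h2 z).trans (by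
    have : 0 ≤ (|s| + 1) * M := by positivity
    linarith)
  have e : (fun s => Zf P A (fun z => φ z + s * ψ z)) = fun s =>
      1 + ∑' N : ℕ, T P A (N + 1) (fun z => φ z + s * ψ z) / (Nat.factorial (N + 1) : ℝ) := by
    funext t
    exact Zf_shift P (M := M + |t| * M) (bd_path h1 h2 le_rfl)
  rw [e, ← (hasSum_U P hA (hm s) hψ (hb s (by linarith)) h2').tsum_eq]
  refine HasDerivAt.const_add 1 ?_
  have hmem : s ∈ Metric.ball (0 : ℝ) (|s| + 1) := by simp
  refine hasDerivAt_tsum_of_isPreconnected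
    (g := fun (N : ℕ) s => T P A (N + 1) (fun z => φ z + s * ψ z) / (Nat.factorial (N + 1) : ℝ))
    (g' := fun (N : ℕ) s => (N + 1 : ℝ) * (∫ x, ψ x * T P A N (fun y => (φ y + s * ψ y) * kk A x y) ∂P)
      / (Nat.factorial (N + 1) : ℝ))
    (u := fun N => M * ((M + (|s| + 1) * M) ^ N / (Nat.factorial N : ℝ)))
    (t := Metric.ball (0 : ℝ) (|s| + 1)) ((Real.summable_pow_div_factorial _).mul_left M)
    Metric.isOpen_ball (convex_ball _ _).isPreconnected ?_ ?_ hmem ?_ hmem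
  · intro N t _
    exact (derT P hA hsym hφ hψ hM h1 h2 N t).div_const _
  · intro N t ht
    have ht' : |t| ≤ |s| + 1 := by
      rw [Metric.mem_ball, Real.dist_eq, sub_zero] at ht
      exact ht.le
    have hi : |∫ x, ψ x * T P A N (fun y => (φ y + t * ψ y) * kk A x y) ∂P|
        ≤ M * (M + (|s| + 1) * M) ^ N := by
      have := norm_integral_le_of_norm_le_const (μ := P) (C := M * (M + (|s| + 1) * M) ^ N)
        (f := fun x => ψ x * T P A N (fun y => (φ y + t * ψ y) * kk A x y))
        (Filter.Eventually.of_forall fun x => by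
          rw [Real.norm_eq_abs, abs_mul]
          exact mul_le_mul (h2 x) (T_abs P (abs_mul_kk (hb t ht') x) N) (abs_nonneg _) hM)
      simpa using this
    rw [Real.norm_eq_abs, abs_div, abs_mul, Nat.abs_cast, Nat.factorial_succ]
    rw [abs_of_nonneg (by positivity : (0 : ℝ) ≤ N + 1)]
    push_cast
    rw [mul_div_mul_left _ _ (by positivity : (N + 1 : ℝ) ≠ 0), ← mul_div_assoc]
    exact div_le_div_of_nonneg_right hi (by positivity)
  · exact (summable_nat_add_iff 1).2 (summ_T P (hb s (by linarith)))

lemma meas_Zk (hA : MeasurableSet {p : E × E | A p.1 p.2}) {φ : E → ℝ} (hφ : Measurable φ)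
    {M : ℝ} (h1 : ∀ z, |φ z| ≤ M) :
    Measurable (fun x => Zf P A (fun y => φ y * kk A x y)) := by
  refine measurable_of_tendsto_metrizable (f := fun (n : ℕ) x => ∑ N ∈ Finset.range n,
    T P A N (fun y => φ y * kk A x y) / (Nat.factorial N : ℝ)) (fun n => ?_) ?_
  · exact Finset.measurable_fun_sum _ fun N _ => (meas_Tk P hA hφ N).measurable.div_const _
  · rw [tendsto_pi_nhds]
    intro x
    exact (summ_T P (abs_mul_kk h1 x)).hasSum.tendsto_sum_nat

noncomputable def rr (P : Measure E) (A : E → E → Prop) (φ : E → ℝ) (x : E) : ℝ :=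
  Zf P A (fun y => φ y * kk A x y) / Zf P A φ

structure Adm (Λ : ℝ) (φ : E → ℝ) : Prop where
  meas : Measurable φ
  nn : ∀ z, 0 ≤ φ z
  le : ∀ z, φ z ≤ Λ

lemma Adm.abs {Λ : ℝ} {φ : E → ℝ} (h : Adm Λ φ) (z : E) : |φ z| ≤ Λ := by
  rw [abs_of_nonneg (h.nn z)]; exact h.le z

lemma Adm.Zpos {Λ : ℝ} {φ : E → ℝ} (h : Adm Λ φ) : 0 < Zf P A φ :=
  zero_lt_one.trans_le (one_le_Zf P h.nn h.le)

lemma Adm.kk (hA : MeasurableSet {p : E × E | A p.1 p.2}) {Λ : ℝ} {φ : E → ℝ} (h : Adm Λ φ)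
    (x : E) : Adm Λ (fun y => φ y * kk A x y) where
  meas := h.meas.mul (meas_kk hA x)
  nn := fun z => mul_nonneg (h.nn z) (kk_nonneg A x z)
  le := fun z => (mul_le_of_le_one_right (h.nn z) (kk_le A x z)).trans (h.le z)

lemma rr_pos (hA : MeasurableSet {p : E × E | A p.1 p.2}) {Λ : ℝ} {φ : E → ℝ} (h : Adm Λ φ)
    (x : E) : 0 < rr P A φ x := div_pos ((h.kk hA x).Zpos P) (h.Zpos P)

lemma rr_le (hA : MeasurableSet {p : E × E | A p.1 p.2}) {Λ : ℝ} {φ : E → ℝ} (h : Adm Λ φ)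
    (x : E) : rr P A φ x ≤ 1 := by
  refine (div_le_one (h.Zpos P)).2 ?_
  exact Zf_mono P hA (h.kk hA x).meas h.meas (h.kk hA x).nn
    (fun z => mul_le_of_le_one_right (h.nn z) (kk_le A x z)) h.le

lemma meas_rr (hA : MeasurableSet {p : E × E | A p.1 p.2}) {Λ : ℝ} {φ : E → ℝ} (h : Adm Λ φ) :
    Measurable (rr P A φ) := (meas_Zk P hA h.meas h.abs).div_const _

lemma log_rr (hA : MeasurableSet {p : E × E | A p.1 p.2}) {Λ : ℝ} {φ : E → ℝ} (h : Adm Λ φ)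
    (x : E) : Real.log (rr P A φ x) = Real.log (Zf P A (fun y => φ y * kk A x y))
      - Real.log (Zf P A φ) :=
  Real.log_div ((h.kk hA x).Zpos P).ne' (h.Zpos P).ne'

lemma log_rr_bd (hA : MeasurableSet {p : E × E | A p.1 p.2}) {Λ : ℝ} {φ : E → ℝ} (h : Adm Λ φ)
    (x : E) : -Λ ≤ Real.log (rr P A φ x) ∧ Real.log (rr P A φ x) ≤ 0 := by
  refine ⟨?_, Real.log_nonpos (rr_pos P hA h x).le (rr_le P hA h x)⟩
  rw [log_rr P hA h]
  have h1 := Real.log_nonneg (one_le_Zf P (A := A) (h.kk hA x).nn (h.kk hA x).le)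
  have h2 : Real.log (Zf P A φ) ≤ Λ := by
    rw [Real.log_le_iff_le_exp (h.Zpos P)]
    exact Zf_le P h.abs
  linarith

lemma derLog (hA : MeasurableSet {p : E × E | A p.1 p.2}) (hsym : ∀ x y, A x y → A y x)
    {φ ψ : E → ℝ} (hφ : Measurable φ) (hψ : Measurable ψ) {M Λ : ℝ} (hM : 0 ≤ M)
    (h1 : ∀ z, |φ z| ≤ M) (h2 : ∀ z, |ψ z| ≤ M) (s : ℝ)
    (had : Adm Λ (fun z => φ z + s * ψ z)) :
    HasDerivAt (fun s => Real.log (Zf P A (fun z => φ z + s * ψ z)))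
      (∫ x, ψ x * rr P A (fun z => φ z + s * ψ z) x ∂P) s := by
  have h := (lemII P hA hsym hφ hψ hM h1 h2 s).log (had.Zpos P).ne'
  convert! h using 1
  rw [← integral_div]
  simp only [rr, mul_div_assoc]

def Close (a : ℝ) (φ φ' : E → ℝ) : Prop :=
  ∀ z, φ z ≤ Real.exp a * φ' z ∧ φ' z ≤ Real.exp a * φ z

lemma pt1 {Λ a c p p' r r' : ℝ} (hac : 0 ≤ a + c) (hp : 0 ≤ p) (hpΛ : p ≤ Λ)
    (hr : 0 < r) (hr1 : r ≤ 1) (hr' : 0 < r') (hc : p ≤ Real.exp a * p')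
    (hl : Real.log r - Real.log r' ≤ c) : p * r - p' * r' ≤ Λ * (a + c) := by
  have h1 : r ≤ Real.exp c * r' := by
    rw [← Real.log_le_log_iff hr (by positivity), Real.log_mul (Real.exp_pos _).ne' hr'.ne',
      Real.log_exp]
    linarith
  have h2 : p * r ≤ Real.exp (a + c) * (p' * r') := by
    calc p * r ≤ (Real.exp a * p') * (Real.exp c * r') :=
          mul_le_mul hc h1 hr.le (hp.trans hc)
      _ = _ := by rw [Real.exp_add]; ring
  have h3 : Real.exp (-(a + c)) * (p * r) ≤ p' * r' := by
    calc _ ≤ Real.exp (-(a + c)) * (Real.exp (a + c) * (p' * r')) :=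
          mul_le_mul_of_nonneg_left h2 (Real.exp_pos _).le
      _ = p' * r' := by rw [← mul_assoc, ← Real.exp_add]; simp
  have h4 : 1 - (a + c) ≤ Real.exp (-(a + c)) := by
    have := Real.add_one_le_exp (-(a + c)); linarith
  have h5 : 0 ≤ p * r := mul_nonneg hp hr.le
  have h6 : p * r ≤ Λ := by
    calc p * r ≤ p * 1 := mul_le_mul_of_nonneg_left hr1 hp
      _ ≤ Λ := by linarith
  have h7 := mul_le_mul_of_nonneg_right h4 h5
  have h8 := mul_le_mul_of_nonneg_right h6 hac
  nlinarith

lemma pt2 {Λ a c p p' r r' : ℝ} (hac : 0 ≤ a + c) (hp : 0 ≤ p) (hpΛ : p ≤ Λ)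
    (hp' : 0 ≤ p') (hpΛ' : p' ≤ Λ)
    (hr : 0 < r) (hr1 : r ≤ 1) (hr' : 0 < r') (hr1' : r' ≤ 1) (hc : p ≤ Real.exp a * p')
    (hc' : p' ≤ Real.exp a * p)
    (hl : |Real.log r - Real.log r'| ≤ c) : |p * r - p' * r'| ≤ Λ * (a + c) := by
  have := abs_le.1 hl
  refine abs_sub_le_iff.2 ⟨pt1 hac hp hpΛ hr hr1 hr' hc (by linarith),
    pt1 hac hp' hpΛ' hr' hr1' hr hc' (by linarith)⟩

lemma step (hA : MeasurableSet {p : E × E | A p.1 p.2}) (hsym : ∀ x y, A x y → A y x)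
    {Λ a c β : ℝ} (hΛ : 0 ≤ Λ) (hac : 0 ≤ a + c) (hβ : ∀ x, ∫ y, (1 - kk A x y) ∂P ≤ β)
    (H : ∀ φ φ' : E → ℝ, Adm Λ φ → Adm Λ φ' → Close a φ φ' → ∀ x,
      |Real.log (rr P A φ x) - Real.log (rr P A φ' x)| ≤ c)
    (φ φ' : E → ℝ) (hφ : Adm Λ φ) (hφ' : Adm Λ φ') (hcl : Close a φ φ') (x : E) :
    |Real.log (rr P A φ x) - Real.log (rr P A φ' x)| ≤ Λ * β * (a + c) := by
  have k0 := kk_nonneg A x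
  have k1 := kk_le A x
  have kbd : ∀ y, |1 - kk A x y| ≤ 1 := fun y => by
    rw [abs_le]; constructor <;> linarith [k0 y, k1 y]
  have key : ∀ φ : E → ℝ, Adm Λ φ → Measurable (fun z => -(φ z * (1 - kk A x z)))
      ∧ (∀ z, |-(φ z * (1 - kk A x z))| ≤ Λ) := by
    intro φ h
    refine ⟨(h.meas.mul (measurable_const.sub (meas_kk hA x))).neg, fun z => ?_⟩
    rw [abs_neg, abs_mul]
    calc _ ≤ Λ * 1 := mul_le_mul (h.abs z) (kbd z) (abs_nonneg _) hΛ
      _ = Λ := mul_one _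
  have fac : ∀ (φ : E → ℝ) (s : ℝ) z, φ z + s * (-(φ z * (1 - kk A x z)))
      = φ z * (1 - s * (1 - kk A x z)) := fun φ s z => by ring
  have hfac0 : ∀ s ∈ Set.Icc (0 : ℝ) 1, ∀ z, 0 ≤ 1 - s * (1 - kk A x z) := by
    intro s hs z
    have := mul_le_mul hs.2 (by linarith [k0 z] : 1 - kk A x z ≤ 1) (by linarith [k1 z]) zero_le_one
    linarith
  have hfac1 : ∀ s ∈ Set.Icc (0 : ℝ) 1, ∀ z, 1 - s * (1 - kk A x z) ≤ 1 := by
    intro s hs z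
    have := mul_nonneg hs.1 (by linarith [k1 z] : 0 ≤ 1 - kk A x z)
    linarith
  have admS : ∀ φ : E → ℝ, Adm Λ φ → ∀ s ∈ Set.Icc (0 : ℝ) 1,
      Adm Λ (fun z => φ z + s * (-(φ z * (1 - kk A x z)))) := by
    intro φ h s hs
    refine ⟨h.meas.add ((key φ h).1.const_mul s), fun z => ?_, fun z => ?_⟩
    · rw [fac]; exact mul_nonneg (h.nn z) (hfac0 s hs z)
    · rw [fac]; exact (mul_le_of_le_one_right (h.nn z) (hfac1 s hs z)).trans (h.le z)
  have hder : ∀ φ : E → ℝ, Adm Λ φ → ∀ s ∈ Set.Icc (0 : ℝ) 1, _ := fun φ h s hs =>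
    derLog P hA hsym h.meas (key φ h).1 hΛ h.abs (key φ h).2 s (admS φ h s hs)
  have hint : ∀ φ : E → ℝ, Adm Λ φ → ∀ s ∈ Set.Icc (0 : ℝ) 1, Integrable
      (fun y => -(φ y * (1 - kk A x y)) * rr P A (fun z => φ z + s * (-(φ z * (1 - kk A x z)))) y) P := by
    intro φ h s hs
    refine Integrable.of_bound (C := Λ * 1)
      ((key φ h).1.mul (meas_rr P hA (admS φ h s hs))).aestronglyMeasurable
      (Filter.Eventually.of_forall fun y => ?_)
    rw [Real.norm_eq_abs, abs_mul]
    refine mul_le_mul ((key φ h).2 y) ?_ (abs_nonneg _) hΛ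
    rw [abs_of_pos (rr_pos P hA (admS φ h s hs) y)]
    exact rr_le P hA (admS φ h s hs) y
  have mv := norm_image_sub_le_of_norm_deriv_le_segment_01'
    (f := fun s => Real.log (Zf P A (fun z => φ z + s * (-(φ z * (1 - kk A x z)))))
      - Real.log (Zf P A (fun z => φ' z + s * (-(φ' z * (1 - kk A x z))))))
    (C := Λ * β * (a + c))
    (fun s hs => ((hder φ hφ s hs).sub (hder φ' hφ' s hs)).hasDerivWithinAt) (by
      intro s hs'
      have hs : s ∈ Set.Icc (0 : ℝ) 1 := Set.Ico_subset_Icc_self hs'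
      rw [← integral_sub (hint φ hφ s hs) (hint φ' hφ' s hs)]
      have hcl' : Close a (fun z => φ z + s * (-(φ z * (1 - kk A x z))))
          (fun z => φ' z + s * (-(φ' z * (1 - kk A x z)))) := by
        intro z
        simp only [fac, ← mul_assoc]
        exact ⟨mul_le_mul_of_nonneg_right (hcl z).1 (hfac0 s hs z),
          mul_le_mul_of_nonneg_right (hcl z).2 (hfac0 s hs z)⟩
      have hI : Integrable (fun y => (1 - kk A x y) * (Λ * (a + c))) P := by
        refine Integrable.mul_const (Integrable.of_bound (C := 1) ?_
          (Filter.Eventually.of_forall kbd)) _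
        exact (measurable_const.sub (meas_kk hA x)).aestronglyMeasurable
      refine (norm_integral_le_of_norm_le hI (Filter.Eventually.of_forall fun y => ?_)).trans ?_
      · have hy := pt2 hac (hφ.nn y) (hφ.le y) (hφ'.nn y) (hφ'.le y)
          (rr_pos P hA (admS φ hφ s hs) y) (rr_le P hA (admS φ hφ s hs) y)
          (rr_pos P hA (admS φ' hφ' s hs) y) (rr_le P hA (admS φ' hφ' s hs) y)
          (hcl y).1 (hcl y).2 (H _ _ (admS φ hφ s hs) (admS φ' hφ' s hs) hcl' y)
        have h1k : 0 ≤ 1 - kk A x y := by linarith [k1 y]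
        calc _ = |(1 - kk A x y) * (φ y * rr P A (fun z => φ z + s * (-(φ z * (1 - kk A x z)))) y
              - φ' y * rr P A (fun z => φ' z + s * (-(φ' z * (1 - kk A x z)))) y)| := by
              rw [Real.norm_eq_abs, ← abs_neg]; congr 1; ring
          _ = (1 - kk A x y) * |φ y * rr P A (fun z => φ z + s * (-(φ z * (1 - kk A x z)))) y
              - φ' y * rr P A (fun z => φ' z + s * (-(φ' z * (1 - kk A x z)))) y| := by
              rw [abs_mul, abs_of_nonneg h1k]
          _ ≤ _ := mul_le_mul_of_nonneg_left hy h1k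
      · rw [integral_mul_const]
        calc _ ≤ β * (Λ * (a + c)) :=
              mul_le_mul_of_nonneg_right (hβ x) (mul_nonneg hΛ hac)
          _ = _ := by ring)
  rw [Real.norm_eq_abs] at mv
  rw [log_rr P hA hφ, log_rr P hA hφ']
  convert! mv using 2
  have e1 : ∀ φ : E → ℝ, (fun y => φ y * kk A x y)
      = fun z => φ z + 1 * (-(φ z * (1 - kk A x z))) := fun φ => by funext z; ring
  have e0 : ∀ φ : E → ℝ, φ = fun z => φ z + 0 * (-(φ z * (1 - kk A x z))) :=
    fun φ => by funext z; ring
  rw [← e1 φ, ← e1 φ', ← e0 φ, ← e0 φ']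
  ring

lemma contr (hA : MeasurableSet {p : E × E | A p.1 p.2}) (hsym : ∀ x y, A x y → A y x)
    {Λ a β : ℝ} (hΛ : 0 ≤ Λ) (ha : 0 ≤ a) (hβ : ∀ x, ∫ y, (1 - kk A x y) ∂P ≤ β)
    (hδ : Λ * β ≤ 1 / 2)
    (φ φ' : E → ℝ) (hφ : Adm Λ φ) (hφ' : Adm Λ φ') (hcl : Close a φ φ') (x : E) :
    |Real.log (rr P A φ x) - Real.log (rr P A φ' x)| ≤ a := by
  have H : ∀ n : ℕ, ∀ φ φ' : E → ℝ, Adm Λ φ → Adm Λ φ' → Close a φ φ' → ∀ x,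
      |Real.log (rr P A φ x) - Real.log (rr P A φ' x)| ≤ a + Λ * (1 / 2) ^ n := by
    intro n
    induction n with
    | zero =>
      intro φ φ' h h' _ x
      have := log_rr_bd P hA h x
      have := log_rr_bd P hA h' x
      rw [abs_le]; constructor <;> simp <;> linarith
    | succ n ih =>
      intro φ φ' h h' hc x
      have hn : 0 ≤ Λ * (1 / 2 : ℝ) ^ n := by positivity
      refine (step P hA hsym hΛ (by linarith) hβ ih φ φ' h h' hc x).trans ?_
      calc _ ≤ 1 / 2 * (a + (a + Λ * (1 / 2) ^ n)) :=
            mul_le_mul_of_nonneg_right hδ (by linarith)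
        _ = _ := by ring
  have hlim : Filter.Tendsto (fun n : ℕ => a + Λ * (1 / 2 : ℝ) ^ n) Filter.atTop (nhds (a + Λ * 0)) :=
    ((tendsto_pow_atTop_nhds_zero_of_lt_one (by norm_num) (by norm_num)).const_mul Λ).const_add a
  rw [mul_zero, add_zero] at hlim
  exact ge_of_tendsto' hlim fun n => H n φ φ' hφ hφ' hcl x

lemma abs_sub_le_log {r r' c : ℝ} (hr : 0 < r) (hr1 : r ≤ 1) (hr' : 0 < r') (hr1' : r' ≤ 1)
    (hc : 0 ≤ c) (h : |Real.log r - Real.log r'| ≤ c) : |r - r'| ≤ c := by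
  have := pt2 (Λ := 1) (a := 0) (p := 1) (p' := 1) (by linarith) zero_le_one le_rfl zero_le_one le_rfl
    hr hr1 hr' hr1' (by simp) (by simp) h
  simpa using this

lemma lemIV (hA : MeasurableSet {p : E × E | A p.1 p.2}) (hsym : ∀ x y, A x y → A y x)
    {m τ β : ℝ} (hm : 0 ≤ m) (hτ : 0 ≤ τ) (hτ1 : τ ≤ 1)
    (hβ : ∀ x, ∫ y, (1 - kk A x y) ∂P ≤ β)
    (hδ : 3 * m * β ≤ 1 / 2) (g : E → ℝ) (hg : Measurable g) (hgτ : ∀ z, |g z| ≤ τ) :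
    Zf P A (fun z => m * Real.exp (g z)) ≤ Zf P A (fun _ => m) *
      Real.exp ((∫ x, m * g x * rr P A (fun _ => m) x ∂P) + 2 * m * τ ^ 2) := by
  have exp3 : ∀ z, Real.exp (g z) ≤ 3 := fun z => by
    have h1 : Real.exp (g z) ≤ Real.exp 1 :=
      Real.exp_le_exp.2 ((le_abs_self _).trans ((hgτ z).trans hτ1))
    have := Real.exp_one_lt_d9
    linarith
  have lo : ∀ z, Real.exp (-τ) ≤ Real.exp (g z) := fun z =>
    Real.exp_le_exp.2 (neg_le_of_abs_le (hgτ z))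
  have hi : ∀ z, Real.exp (g z) ≤ Real.exp τ := fun z =>
    Real.exp_le_exp.2 ((le_abs_self _).trans (hgτ z))
  have lo1 : Real.exp (-τ) ≤ 1 := Real.exp_le_one_iff.2 (by linarith)
  have hi1 : 1 ≤ Real.exp τ := Real.one_le_exp hτ
  have fm : Measurable (fun z => m * (Real.exp (g z) - 1)) := by fun_prop
  have fb : ∀ z, |m * (Real.exp (g z) - 1)| ≤ 3 * m := fun z => by
    rw [abs_mul, abs_of_nonneg hm]
    have : |Real.exp (g z) - 1| ≤ 3 := by
      rw [abs_le]; constructor <;> linarith [exp3 z, Real.exp_pos (g z)]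
    nlinarith
  have hm3 : |m| ≤ 3 * m := by rw [abs_of_nonneg hm]; linarith
  have adm0 : Adm (3 * m) (fun _ : E => m) :=
    ⟨measurable_const, fun _ => hm, fun _ => by linarith⟩
  have inter : ∀ s ∈ Set.Icc (0 : ℝ) 1, ∀ z, Real.exp (-τ) ≤ 1 + s * (Real.exp (g z) - 1) ∧
      1 + s * (Real.exp (g z) - 1) ≤ Real.exp τ ∧ 1 + s * (Real.exp (g z) - 1) ≤ 3 := by
    intro s hs z
    have a1 := lo z
    have a2 := hi z
    have a3 := exp3 z
    have b1 := mul_le_mul_of_nonneg_left a1 hs.1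
    have b2 := mul_le_mul_of_nonneg_left a2 hs.1
    have b3 := mul_le_mul_of_nonneg_left a3 hs.1
    have hs1 : 0 ≤ 1 - s := by linarith [hs.2]
    have c1 := mul_le_mul_of_nonneg_left lo1 hs1
    have c2 := mul_le_mul_of_nonneg_left hi1 hs1
    refine ⟨by nlinarith, by nlinarith, by nlinarith [hs.2]⟩
  have admS : ∀ s ∈ Set.Icc (0 : ℝ) 1, Adm (3 * m) (fun z => m + s * (m * (Real.exp (g z) - 1))) := by
    intro s hs
    refine ⟨by fun_prop, fun z => ?_, fun z => ?_⟩
    · have := (Real.exp_pos (-τ)).le.trans (inter s hs z).1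
      nlinarith [mul_nonneg hm this]
    · have := mul_le_mul_of_nonneg_left (inter s hs z).2.2 hm
      nlinarith
  have clS : ∀ s ∈ Set.Icc (0 : ℝ) 1,
      Close τ (fun z => m + s * (m * (Real.exp (g z) - 1))) (fun _ => m) := by
    intro s hs z
    have i1 := mul_le_mul_of_nonneg_left (inter s hs z).1 hm
    have i2 := mul_le_mul_of_nonneg_left (inter s hs z).2.1 hm
    refine ⟨by nlinarith, ?_⟩
    calc m = Real.exp τ * (m * Real.exp (-τ)) := by
          rw [mul_left_comm, ← Real.exp_add]; simp
      _ ≤ Real.exp τ * (m * (1 + s * (Real.exp (g z) - 1))) :=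
          mul_le_mul_of_nonneg_left i1 (Real.exp_pos _).le
      _ = _ := by ring
  have hder := fun s (hs : s ∈ Set.Icc (0 : ℝ) 1) =>
    derLog P hA hsym (φ := fun _ => m) measurable_const fm (by linarith : 0 ≤ 3 * m)
      (fun _ => hm3) fb s (admS s hs)
  have rabs : ∀ φ : E → ℝ, Adm (3 * m) φ → ∀ x, |rr P A φ x| ≤ 1 := fun φ h x => by
    rw [abs_of_pos (rr_pos P hA h x)]; exact rr_le P hA h x
  have int1 : ∀ s ∈ Set.Icc (0 : ℝ) 1, Integrable (fun x => m * (Real.exp (g x) - 1) *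
      rr P A (fun z => m + s * (m * (Real.exp (g z) - 1))) x) P := by
    intro s hs
    refine Integrable.of_bound (C := 3 * m * 1)
      (fm.mul (meas_rr P hA (admS s hs))).aestronglyMeasurable
      (Filter.Eventually.of_forall fun y => ?_)
    rw [Real.norm_eq_abs, abs_mul]
    exact mul_le_mul (fb y) (rabs _ (admS s hs) y) (abs_nonneg _) (by linarith)
  have int0 : Integrable (fun x => m * g x * rr P A (fun _ => m) x) P := by
    refine Integrable.of_bound (C := m * τ * 1)
      ((hg.const_mul m).mul (meas_rr P hA adm0)).aestronglyMeasurable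
      (Filter.Eventually.of_forall fun y => ?_)
    rw [Real.norm_eq_abs, abs_mul, abs_mul, abs_of_nonneg hm]
    exact mul_le_mul (mul_le_mul_of_nonneg_left (hgτ y) hm) (rabs _ adm0 y) (abs_nonneg _)
      (by positivity)
  set J := ∫ x, m * g x * rr P A (fun _ => m) x ∂P with hJ
  have mv := norm_image_sub_le_of_norm_deriv_le_segment_01'
    (f := fun s => Real.log (Zf P A (fun z => m + s * (m * (Real.exp (g z) - 1)))) - s * J)
    (C := 2 * m * τ ^ 2)
    (fun s hs => ((hder s hs).sub ((hasDerivAt_id s).mul_const J)).hasDerivWithinAt) (by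
      intro s hs'
      have hs : s ∈ Set.Icc (0 : ℝ) 1 := Set.Ico_subset_Icc_self hs'
      rw [one_mul, hJ, ← integral_sub (int1 s hs) int0]
      have := norm_integral_le_of_norm_le_const (μ := P) (C := 2 * m * τ ^ 2)
        (f := fun x => m * (Real.exp (g x) - 1) *
          rr P A (fun z => m + s * (m * (Real.exp (g z) - 1))) x - m * g x * rr P A (fun _ => m) x)
        (Filter.Eventually.of_forall fun x => ?_)
      · simpa using this
      · have hr := abs_sub_le_log (rr_pos P hA (admS s hs) x) (rr_le P hA (admS s hs) x)
          (rr_pos P hA adm0 x) (rr_le P hA adm0 x) hτ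
          (contr P hA hsym (by linarith) hτ hβ hδ _ _ (admS s hs) adm0 (clS s hs) x)
        have he : |Real.exp (g x) - 1 - g x| ≤ τ ^ 2 :=
          (Real.abs_exp_sub_one_sub_id_le ((hgτ x).trans hτ1)).trans
            (by rw [← sq_abs]; exact pow_le_pow_left₀ (abs_nonneg _) (hgτ x) 2)
        have hra := rabs _ (admS s hs) x
        generalize rr P A (fun z => m + s * (m * (Real.exp (g z) - 1))) x = R at hr hra ⊢
        generalize rr P A (fun _ => m) x = R0 at hr ⊢
        calc _ = |m * ((Real.exp (g x) - 1 - g x) * R + g x * (R - R0))| := by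
              rw [Real.norm_eq_abs]; congr 1; ring
          _ = m * |(Real.exp (g x) - 1 - g x) * R + g x * (R - R0)| := by
              rw [abs_mul, abs_of_nonneg hm]
          _ ≤ m * (τ ^ 2 * 1 + τ * τ) := by
              refine mul_le_mul_of_nonneg_left ((abs_add_le _ _).trans ?_) hm
              rw [abs_mul, abs_mul]
              exact add_le_add (mul_le_mul he hra (abs_nonneg _) (by positivity))
                (mul_le_mul (hgτ x) hr (abs_nonneg _) hτ)
          _ = _ := by ring)
  have e1 : (fun z => m * Real.exp (g z)) = fun z => m + 1 * (m * (Real.exp (g z) - 1)) := by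
    funext z; ring
  have e0 : (fun _ : E => m) = fun z => m + 0 * (m * (Real.exp (g z) - 1)) := by
    funext z; ring
  rw [← e1, ← e0, Real.norm_eq_abs] at mv
  have mv' := (le_abs_self _).trans mv
  have adm1 : Adm (3 * m) (fun z => m * Real.exp (g z)) := by
    rw [e1]; exact admS 1 ⟨zero_le_one, le_rfl⟩
  rw [← Real.log_le_log_iff (adm1.Zpos P) (mul_pos (adm0.Zpos P) (Real.exp_pos _)),
    Real.log_mul (adm0.Zpos P).ne' (Real.exp_pos _).ne', Real.log_exp]
  linarith

lemma mean_eq (hA : MeasurableSet {p : E × E | A p.1 p.2}) (hsym : ∀ x y, A x y → A y x)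
    {m B : ℝ} (hm : 0 < m) (hB : 0 ≤ B) (h : E → ℝ) (hh : Measurable h) (hb : ∀ z, |h z| ≤ B) :
    (∑' N : ℕ, m ^ N / (Nat.factorial N : ℝ) *
      ∫ Z : Fin N → E, ex A Z * (m⁻¹ * ∑ i, h (Z i)) ∂(Measure.pi fun _ => P))
    = m⁻¹ * (∫ x, m * h x * rr P A (fun _ => m) x ∂P) * Zf P A (fun _ : E => m) := by
  have hZ : 0 < Zf P A (fun _ : E => m) :=
    Adm.Zpos P (Λ := m) ⟨measurable_const, fun _ => hm.le, fun _ => le_rfl⟩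
  have hs := hasSum_U P hA (φ := fun _ => m) (ψ := fun z => m * h z) (M := m + m * B)
    measurable_const (hh.const_mul m)
    (fun _ => by rw [abs_of_pos hm]; linarith [mul_nonneg hm.le hB])
    (fun z => by rw [abs_mul, abs_of_pos hm]; linarith [mul_le_mul_of_nonneg_left (hb z) hm.le])
  have hst := fun N => sum_term P hA hsym (φ := fun _ => m) (ψ := fun z => m * h z) (M := m + m * B)
    measurable_const (hh.const_mul m)
    (fun _ => by rw [abs_of_pos hm]; linarith [mul_nonneg hm.le hB])
    (fun z => by rw [abs_mul, abs_of_pos hm]; linarith [mul_le_mul_of_nonneg_left (hb z) hm.le]) N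
  have hs2 := hs.mul_left m⁻¹
  have hterm : ∀ N : ℕ, m⁻¹ * ((N + 1 : ℝ) *
      (∫ x, m * h x * T P A N (fun y => m * kk A x y) ∂P) / (Nat.factorial (N + 1) : ℝ))
      = m ^ (N + 1) / (Nat.factorial (N + 1) : ℝ) *
      ∫ Z : Fin (N + 1) → E, ex A Z * (m⁻¹ * ∑ i, h (Z i)) ∂(Measure.pi fun _ => P) := by
    intro N
    rw [← hst N, ← mul_div_assoc, ← integral_const_mul, div_mul_eq_mul_div, ← integral_const_mul]
    congr 1
    refine integral_congr_ae (Filter.Eventually.of_forall fun Z => ?_)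
    simp only [Finset.prod_const, Finset.card_univ, Fintype.card_fin, ← Finset.sum_mul,
      ← Finset.mul_sum]
    ring
  simp_rw [hterm] at hs2
  have hs3 := (hasSum_nat_add_iff (f := fun N : ℕ => m ^ N / (Nat.factorial N : ℝ) *
      ∫ Z : Fin N → E, ex A Z * (m⁻¹ * ∑ i, h (Z i)) ∂(Measure.pi fun _ => P)) 1).1 hs2
  rw [hs3.tsum_eq]
  simp only [Finset.range_one, Finset.sum_singleton]
  have h0 : (∫ Z : Fin 0 → E, ex A Z * (m⁻¹ * ∑ i, h (Z i)) ∂(Measure.pi fun _ => P)) = 0 := by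
    simp
  rw [h0, mul_zero, add_zero, mul_assoc]
  congr 1
  rw [← integral_mul_const]
  refine integral_congr_ae (Filter.Eventually.of_forall fun x => ?_)
  simp only [rr]
  field_simp

lemma pow_bd (x : ℝ) (p : ℕ) : |x| ^ p ≤ (Nat.factorial p : ℝ) * (Real.exp x + Real.exp (-x)) := by
  have h1 := Real.pow_div_factorial_le_exp |x| (abs_nonneg x) p
  have h2 : Real.exp |x| ≤ Real.exp x + Real.exp (-x) := by
    rcases abs_cases x with ⟨h, _⟩ | ⟨h, _⟩ <;> rw [h] <;>
      linarith [Real.exp_pos x, Real.exp_pos (-x)]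
  have h3 : (0 : ℝ) < Nat.factorial p := by positivity
  rw [div_le_iff₀ h3] at h1
  nlinarith

lemma moments (hA : MeasurableSet {p : E × E | A p.1 p.2}) (hsym : ∀ x y, A x y → A y x)
    {m B β : ℝ} (hm : 1 ≤ m) (hB : 0 < B) (hβ : ∀ x, ∫ y, (1 - kk A x y) ∂P ≤ β)
    (hδ : 3 * m * β ≤ 1 / 2) (h : E → ℝ) (hh : Measurable h) (hb : ∀ z, |h z| ≤ B) (p : ℕ)
    (J : ℝ) (hJ : J = ∫ x, m * h x * rr P A (fun _ => m) x ∂P) :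
    |∑' N : ℕ, m ^ N / (Nat.factorial N : ℝ) *
      ∫ Z : Fin N → E, ex A Z * ((∑ i, h (Z i) - J) / Real.sqrt m) ^ p ∂(Measure.pi fun _ => P)|
    ≤ 2 * (Nat.factorial p : ℝ) * Real.exp 2 * B ^ p * Zf P A (fun _ : E => m) := by
  have hm0 : 0 < m := by linarith
  have hq1 : 1 ≤ Real.sqrt m := Real.one_le_sqrt.2 hm
  have hq : 0 < Real.sqrt m := by linarith
  have hqq : Real.sqrt m * Real.sqrt m = m := Real.mul_self_sqrt hm0.le
  -- the tilted activities
  let G : ℝ → E → ℝ := fun σ z => σ * h z / (B * Real.sqrt m)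
  have hG : ∀ σ : ℝ, |σ| = 1 → ∀ z, |G σ z| ≤ 1 / Real.sqrt m := by
    intro σ hσ z
    simp only [G]
    rw [abs_div, abs_mul, hσ, one_mul, abs_of_pos (by positivity : 0 < B * Real.sqrt m),
      div_le_div_iff₀ (by positivity) hq]
    have := mul_le_mul_of_nonneg_right (hb z) hq.le
    linarith
  have hGm : ∀ σ, Measurable (G σ) := fun σ => by
    simp only [G]; fun_prop
  have hZ : ∀ σ : ℝ, |σ| = 1 → Real.exp (-(σ * J / (B * Real.sqrt m))) *
      Zf P A (fun z => m * Real.exp (G σ z)) ≤ Real.exp 2 * Zf P A (fun _ : E => m) := by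
    intro σ hσ
    have h4 := lemIV P hA hsym hm0.le (τ := 1 / Real.sqrt m) (by positivity)
      ((div_le_one hq).2 hq1) hβ hδ (G σ) (hGm σ) (hG σ hσ)
    have e1 : (∫ x, m * G σ x * rr P A (fun _ => m) x ∂P) = σ * J / (B * Real.sqrt m) := by
      rw [hJ, ← integral_const_mul, ← integral_div]
      refine integral_congr_ae (Filter.Eventually.of_forall fun x => ?_)
      simp only [G]; ring
    have e2 : 2 * m * (1 / Real.sqrt m) ^ 2 = 2 := by
      rw [div_pow, Real.sq_sqrt hm0.le]; field_simp
    rw [e1, e2] at h4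
    calc _ ≤ Real.exp (-(σ * J / (B * Real.sqrt m))) * (Zf P A (fun _ : E => m) *
          Real.exp (σ * J / (B * Real.sqrt m) + 2)) :=
          mul_le_mul_of_nonneg_left h4 (Real.exp_pos _).le
      _ = (Real.exp (-(σ * J / (B * Real.sqrt m))) * Real.exp (σ * J / (B * Real.sqrt m) + 2)) *
          Zf P A (fun _ : E => m) := by ring
      _ = _ := by rw [← Real.exp_add]; ring_nf
  have hbdσ : ∀ σ : ℝ, |σ| = 1 → ∀ z, |m * Real.exp (G σ z)| ≤ m * Real.exp 1 := by
    intro σ hσ z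
    rw [abs_of_pos (by positivity)]
    refine mul_le_mul_of_nonneg_left (Real.exp_le_exp.2 ?_) hm0.le
    exact (le_abs_self _).trans ((hG σ hσ z).trans ((div_le_one hq).2 hq1))
  have hmσ : ∀ σ, Measurable (fun z => m * Real.exp (G σ z)) := fun σ => by
    have := hGm σ; fun_prop
  let c : ℝ → ℝ := fun σ => Real.exp (-(σ * J / (B * Real.sqrt m)))
  have expid : ∀ (σ : ℝ) (N : ℕ) (Z : Fin N → E),
      m ^ N * Real.exp (σ * ((∑ i, h (Z i) - J) / Real.sqrt m / B))
        = c σ * ∏ i, (m * Real.exp (G σ (Z i))) := by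
    intro σ N Z
    rw [Finset.prod_mul_distrib, ← Real.exp_sum]
    simp only [Finset.prod_const, Finset.card_univ, Fintype.card_fin, c]
    rw [mul_left_comm, ← Real.exp_add]
    congr 2
    simp only [G, ← Finset.sum_div, ← Finset.mul_sum]
    field_simp
    ring
  let bd : ℕ → ℝ := fun N => (Nat.factorial p : ℝ) * B ^ p *
    (c 1 * (T P A N (fun z => m * Real.exp (G 1 z)) / (Nat.factorial N : ℝ))
      + c (-1) * (T P A N (fun z => m * Real.exp (G (-1) z)) / (Nat.factorial N : ℝ)))
  have a1 : |(1 : ℝ)| = 1 := abs_one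
  have a2 : |(-1 : ℝ)| = 1 := by simp
  have hbds : HasSum bd ((Nat.factorial p : ℝ) * B ^ p *
      (c 1 * Zf P A (fun z => m * Real.exp (G 1 z))
        + c (-1) * Zf P A (fun z => m * Real.exp (G (-1) z)))) := by
    refine HasSum.mul_left _ (HasSum.add (HasSum.mul_left _ ?_) (HasSum.mul_left _ ?_))
    · exact (summ_T P (hbdσ 1 a1)).hasSum
    · exact (summ_T P (hbdσ (-1) a2)).hasSum
  have hterm : ∀ N : ℕ, ‖m ^ N / (Nat.factorial N : ℝ) *
      ∫ Z : Fin N → E, ex A Z * ((∑ i, h (Z i) - J) / Real.sqrt m) ^ p ∂(Measure.pi fun _ => P)‖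
      ≤ bd N := by
    intro N
    have hi1 := int_T P hA (hmσ 1) (hbdσ 1 a1) N
    have hi2 := int_T P hA (hmσ (-1)) (hbdσ (-1) a2) N
    have hI := ((hi1.const_mul (c 1)).add (hi2.const_mul (c (-1)))).const_mul
      ((Nat.factorial p : ℝ) * B ^ p)
    rw [div_mul_eq_mul_div, ← integral_const_mul, norm_div, Real.norm_natCast]
    have key := norm_integral_le_of_norm_le hI (f := fun Z : Fin N → E =>
      m ^ N * (ex A Z * ((∑ i, h (Z i) - J) / Real.sqrt m) ^ p))
      (Filter.Eventually.of_forall fun Z => by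
        have hx := pow_bd ((∑ i, h (Z i) - J) / Real.sqrt m / B) p
        have i1 := expid 1 N Z
        have i2 := expid (-1) N Z
        rw [one_mul] at i1
        rw [neg_one_mul] at i2
        simp only [Pi.add_apply]
        set x := (∑ i, h (Z i) - J) / Real.sqrt m with hxd
        clear_value x
        have hxp : |x| ^ p = B ^ p * |x / B| ^ p := by
          rw [abs_div, abs_of_pos hB, div_pow]; field_simp
        rw [Real.norm_eq_abs, abs_mul, abs_mul, abs_of_nonneg (ex_nonneg A Z), abs_pow x,
          abs_of_pos (by positivity : 0 < m ^ N), hxp]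
        calc _ = (ex A Z * m ^ N * B ^ p) * |x / B| ^ p := by ring
          _ ≤ (ex A Z * m ^ N * B ^ p) *
              ((Nat.factorial p : ℝ) * (Real.exp (x / B) + Real.exp (-(x / B)))) :=
              mul_le_mul_of_nonneg_left hx (mul_nonneg (mul_nonneg (ex_nonneg A Z)
                (by positivity)) (by positivity))
          _ = ex A Z * B ^ p * (Nat.factorial p : ℝ) *
              (m ^ N * Real.exp (x / B) + m ^ N * Real.exp (-(x / B))) := by ring
          _ = _ := by rw [i1, i2]; ring)
    refine (div_le_div_of_nonneg_right key (by positivity)).trans (le_of_eq ?_)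
    rw [integral_const_mul]
    simp only [Pi.add_apply]
    rw [integral_add (hi1.const_mul (c 1)) (hi2.const_mul (c (-1))), integral_const_mul,
      integral_const_mul]
    simp only [bd, T]
    ring
  have := tsum_of_norm_bounded hbds hterm
  rw [Real.norm_eq_abs] at this
  refine this.trans ?_
  have z1 := hZ 1 a1
  have z2 := hZ (-1) a2
  have hpos : 0 ≤ (Nat.factorial p : ℝ) * B ^ p := by positivity
  calc _ ≤ (Nat.factorial p : ℝ) * B ^ p * (Real.exp 2 * Zf P A (fun _ : E => m)
        + Real.exp 2 * Zf P A (fun _ : E => m)) :=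
        mul_le_mul_of_nonneg_left (add_le_add z1 z2) hpos
    _ = _ := by ring

end

lemma lintegral_pi_prod {E : Type*} [MeasurableSpace E] {N : ℕ} (μ : Fin N → Measure E)
    [∀ i, SigmaFinite (μ i)]
    {f : E → ENNReal} (hf : Measurable f) :
    ∫⁻ Z : Fin N → E, ∏ i, f (Z i) ∂(Measure.pi μ) = ∏ i, ∫⁻ z, f z ∂(μ i) := by
  induction N with
  | zero => simp
  | succ N ih =>
    have mp := measurePreserving_piFinSuccAbove μ 0
    have e : ∀ Z : Fin (N + 1) → E, ∏ i, f (Z i) = (fun q : E × (Fin N → E) =>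
        f q.1 * ∏ j, f (q.2 j)) (MeasurableEquiv.piFinSuccAbove (fun _ => E) 0 Z) := by
      intro Z
      rw [Fin.prod_univ_succ]
      rfl
    rw [lintegral_congr e, mp.lintegral_comp (f := fun q : E × (Fin N → E) =>
        f q.1 * ∏ j, f (q.2 j)) (by fun_prop), lintegral_prod_mul (f := f)
        (g := fun w : Fin N → E => ∏ j, f (w j)) hf.aemeasurable
        (Finset.measurable_fun_prod _ fun i _ =>
          hf.comp (measurable_pi_apply i)).aemeasurable, ih,
      Fin.prod_univ_succ]
    rfl

lemma pi_withDensity {E : Type*} [MeasurableSpace E] (μ : Measure E) [SigmaFinite μ]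
    {f : E → ENNReal} (hf : Measurable f) [SigmaFinite (μ.withDensity f)] (N : ℕ) :
    Measure.pi (fun _ : Fin N => μ.withDensity f)
      = (Measure.pi fun _ : Fin N => μ).withDensity (fun Z => ∏ i, f (Z i)) := by
  refine Measure.pi_eq fun s hs => ?_
  rw [withDensity_apply _ (MeasurableSet.univ_pi hs), Measure.restrict_pi_pi,
    lintegral_pi_prod _ hf]
  refine Finset.prod_congr rfl fun i _ => ?_
  rw [withDensity_apply _ (hs i)]

end HC

namespace HC

lemma maxw_meas (d : ℕ) : Measurable (fun v : EuclideanSpace ℝ (Fin d) => maxwellian v) := by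
  unfold maxwellian; fun_prop

lemma maxw_nonneg {d : ℕ} (v : EuclideanSpace ℝ (Fin d)) : 0 ≤ maxwellian v := by
  unfold maxwellian; positivity

noncomputable def gam (d : ℕ) : Measure (EuclideanSpace ℝ (Fin d)) :=
  volume.withDensity fun v => ENNReal.ofReal (maxwellian v)

lemma maxw_int (d : ℕ) : ∫ v : EuclideanSpace ℝ (Fin d), maxwellian v = 1 := by
  unfold maxwellian
  rw [integral_const_mul]
  have h := GaussianFourier.integral_rexp_neg_mul_sq_norm (V := EuclideanSpace ℝ (Fin d))
    (b := 1 / 2) (by norm_num)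
  have e : (fun v : EuclideanSpace ℝ (Fin d) => Real.exp (-‖v‖ ^ 2 / 2))
      = fun v => Real.exp (-(1 / 2) * ‖v‖ ^ 2) := by
    funext v; congr 1; ring
  rw [e, h, finrank_euclideanSpace_fin, show π / (1 / 2) = 2 * π by ring,
    ← Real.rpow_add (by positivity), neg_div, neg_add_cancel, Real.rpow_zero]

instance gam_prob (d : ℕ) : IsProbabilityMeasure (gam d) := by
  constructor
  unfold gam
  rw [withDensity_apply _ MeasurableSet.univ, Measure.restrict_univ,
    ← ofReal_integral_eq_lintegral_ofReal _ (Filter.Eventually.of_forall maxw_nonneg), maxw_int,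
    ENNReal.ofReal_one]
  by_contra hc
  have := integral_undef hc
  rw [maxw_int] at this
  exact one_ne_zero this

noncomputable def PP (d : ℕ) : Measure (Phase d) := (volume : Measure (Torus d)).prod (gam d)

instance circ_prob : IsProbabilityMeasure (volume : Measure (AddCircle (1 : ℝ))) :=
  ⟨by rw [AddCircle.measure_univ]; simp⟩

instance PP_prob (d : ℕ) : IsProbabilityMeasure (PP d) := by unfold PP; infer_instance

lemma PP_eq (d : ℕ) : PP d = (volume : Measure (Phase d)).withDensity
    (fun z => ENNReal.ofReal (maxwellian z.2)) := by
  unfold PP gam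
  rw [prod_withDensity_right (maxw_meas d).ennreal_ofReal]
  rfl

lemma int_PP (d N : ℕ) (F : (Fin N → Phase d) → ℝ) (e : (Fin N → Phase d) → ℝ) :
    ∫ Z : Fin N → Phase d, e Z * (∏ i, maxwellian (Z i).2) * F Z
      = ∫ Z, e Z * F Z ∂(Measure.pi fun _ => PP d) := by
  have hm : Measurable (fun z : Phase d => ENNReal.ofReal (maxwellian z.2)) :=
    ((maxw_meas d).comp measurable_snd).ennreal_ofReal
  have hM : Measurable (fun Z : Fin N → Phase d => ∏ i, ENNReal.ofReal (maxwellian (Z i).2)) :=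
    Finset.measurable_fun_prod _ fun i _ => hm.comp (measurable_pi_apply i)
  have hp := PP_prob d
  rw [PP_eq] at hp
  rw [PP_eq, pi_withDensity _ hm, integral_withDensity_eq_integral_toReal_smul hM
    (Filter.Eventually.of_forall fun Z => ENNReal.prod_lt_top fun i _ => ENNReal.ofReal_lt_top)]
  rw [volume_pi]
  refine integral_congr_ae (Filter.Eventually.of_forall fun Z => ?_)
  simp only [ENNReal.toReal_prod, ENNReal.toReal_ofReal (maxw_nonneg _), smul_eq_mul]
  ring

def AA (d : ℕ) (ε : ℝ) (z w : Phase d) : Prop := ε < torusDist z.1 w.1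

lemma td_meas (d : ℕ) : Measurable (fun q : Torus d × Torus d => torusDist q.1 q.2) := by
  unfold torusDist
  refine Real.continuous_sqrt.measurable.comp (Finset.measurable_fun_sum _ fun i _ => ?_)
  have h1 : Measurable (fun q : Torus d × Torus d => q.1 i) :=
    (measurable_pi_apply i).comp measurable_fst
  have h2 : Measurable (fun q : Torus d × Torus d => q.2 i) :=
    (measurable_pi_apply i).comp measurable_snd
  exact (h1.dist h2).pow_const 2

lemma AA_meas (d : ℕ) (ε : ℝ) : MeasurableSet {p : Phase d × Phase d | AA d ε p.1 p.2} := by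
  have h1 : Measurable (fun p : Phase d × Phase d => p.1.1) :=
    measurable_fst.comp measurable_fst
  have h2 : Measurable (fun p : Phase d × Phase d => p.2.1) :=
    measurable_fst.comp measurable_snd
  have h3 : Measurable (fun p : Phase d × Phase d => torusDist p.1.1 p.2.1) :=
    Measurable.comp (g := fun q : Torus d × Torus d => torusDist q.1 q.2)
      (f := fun p : Phase d × Phase d => (p.1.1, p.2.1)) (td_meas d) (h1.prodMk h2)
  exact measurableSet_lt measurable_const h3

lemma AA_symm (d : ℕ) (ε : ℝ) (x y : Phase d) (h : AA d ε x y) : AA d ε y x := by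
  have e : torusDist y.1 x.1 = torusDist x.1 y.1 := by
    unfold torusDist
    congr 1
    exact Finset.sum_congr rfl fun i _ => by rw [dist_comm]
  change ε < _
  rw [e]
  exact h

lemma excl_eq (d : ℕ) (ε : ℝ) {N : ℕ} (Z : Fin N → Phase d) :
    exclInd ε (fun i => (Z i).1) = ex (AA d ε) Z := rfl

lemma excl_meas (d : ℕ) (ε : ℝ) (N : ℕ) : Measurable (fun X : Fin N → Torus d => exclInd ε X) :=
  meas_ex (A := fun x y : Torus d => ε < torusDist x y)
    (measurableSet_lt measurable_const (td_meas d)) N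

lemma part_eq (d : ℕ) (ε : ℝ) : partitionZ d ε = Zf (PP d) (AA d ε) (fun _ => muBG d ε) := by
  unfold partitionZ Zf T
  congr 1
  funext N
  have mp : MeasurePreserving (fun (Z : Fin N → Phase d) i => (Z i).1)
      (Measure.pi fun _ => PP d) (Measure.pi fun _ => volume) :=
    measurePreserving_pi _ _ (fun _ => measurePreserving_fst)
  have h := integral_map mp.measurable.aemeasurable
    (excl_meas d ε N).aestronglyMeasurable (μ := Measure.pi fun _ => PP d)
  rw [mp.map_eq] at h
  rw [volume_pi, h]
  simp only [Finset.prod_const, Finset.card_univ, Fintype.card_fin]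
  rw [integral_mul_const]
  simp only [excl_eq]
  ring

lemma gce_eq (d : ℕ) (ε : ℝ) (F : (N : ℕ) → (Fin N → Phase d) → ℝ) :
    gceExp d ε F = (Zf (PP d) (AA d ε) (fun _ => muBG d ε))⁻¹ *
      ∑' N : ℕ, muBG d ε ^ N / (Nat.factorial N : ℝ) *
        ∫ Z, ex (AA d ε) Z * F N Z ∂(Measure.pi fun _ => PP d) := by
  unfold gceExp
  rw [part_eq]
  simp_rw [int_PP, excl_eq]

lemma ball_bd (d : ℕ) (ε : ℝ) (hε : 0 < ε) (x : Phase d) :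
    ∫ y, (1 - kk (AA d ε) x y) ∂(PP d) ≤ (2 * ε) ^ d := by
  let S : Set (Phase d) := {y | ¬ AA d ε x y}
  have hS : MeasurableSet S := by
    have : MeasurableSet {y | AA d ε x y} := (measurable_const.prodMk measurable_id) (AA_meas d ε)
    exact this.compl
  have e : (fun y => 1 - kk (AA d ε) x y) = S.indicator (fun _ => (1 : ℝ)) := by
    funext y
    by_cases h : AA d ε x y
    · simp [kk, S, h]
    · simp [kk, S, h]
  rw [e, integral_indicator hS, setIntegral_const, smul_eq_mul, mul_one]
  have hsub : S ⊆ (Set.univ.pi fun i => Metric.closedBall (x.1 i) ε) ×ˢ Set.univ := by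
    intro y hy
    refine ⟨fun i _ => ?_, trivial⟩
    have hy' : torusDist x.1 y.1 ≤ ε := not_lt.1 hy
    rw [Metric.mem_closedBall, dist_comm]
    refine le_trans ?_ hy'
    unfold torusDist
    refine Real.le_sqrt_of_sq_le ?_
    exact Finset.single_le_sum (f := fun i => dist (x.1 i) (y.1 i) ^ 2)
      (fun i _ => sq_nonneg _) (Finset.mem_univ i)
  have hle : PP d S ≤ ENNReal.ofReal ((2 * ε) ^ d) := by
    refine (measure_mono hsub).trans ?_
    unfold PP
    rw [Measure.prod_prod, measure_univ, mul_one, volume_pi, Measure.pi_pi,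
      ENNReal.ofReal_pow (by positivity)]
    calc _ ≤ ∏ _i : Fin d, ENNReal.ofReal (2 * ε) := by
          refine Finset.prod_le_prod' fun i _ => ?_
          rw [AddCircle.volume_closedBall]
          exact ENNReal.ofReal_le_ofReal (min_le_right _ _)
      _ = _ := by simp
  exact ENNReal.toReal_le_of_le_ofReal (by positivity) hle

end HC

/-- Uniform moment bounds for the equilibrium fluctuation field: for every `p ≥ 1`
there is `C_p > 0` (depending only on `p` and `d`) such that for all small enough
`ε > 0` and every bounded measurable `h`,
`|𝔼^eq_ε[(ζ^{ε,eq}(h))^p]| ≤ C_p ‖h‖_∞^p` (here `B` is any uniform bound on `|h|`). -/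
theorem moment_bounds_fluctField (d : ℕ) (hd : 2 ≤ d) (p : ℕ) (hp : 1 ≤ p) :
    ∃ C : ℝ, 0 < C ∧ ∃ ε₀ : ℝ, 0 < ε₀ ∧
      ∀ ε : ℝ, 0 < ε → ε < ε₀ →
        ∀ h : Phase d → ℝ, Measurable h →
          ∀ B : ℝ, 0 ≤ B → (∀ z, |h z| ≤ B) →
            |gceExp d ε (fun N Z => fluctField d ε h N Z ^ p)| ≤ C * B ^ p := by
  refine ⟨2 * (Nat.factorial p : ℝ) * Real.exp 2, by positivity, 1 / (6 * 2 ^ d), by positivity, ?_⟩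
  intro ε hε hε0 h hh B hB hb
  have h2d : (1 : ℝ) ≤ 2 ^ d := one_le_pow₀ (by norm_num)
  have hε1 : ε ≤ 1 := by
    refine hε0.le.trans ?_
    rw [div_le_one (by positivity)]
    linarith
  have hmu : 1 ≤ muBG d ε := by
    unfold muBG
    exact (one_le_inv₀ (by positivity)).2 (pow_le_one₀ hε.le hε1)
  have hmu0 : 0 < muBG d ε := by linarith
  have hδ : 3 * muBG d ε * (2 * ε) ^ d ≤ 1 / 2 := by
    obtain ⟨k, rfl⟩ : ∃ k, d = k + 1 := ⟨d - 1, by omega⟩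
    have e : 3 * muBG (k + 1) ε * (2 * ε) ^ (k + 1) = 3 * 2 ^ (k + 1) * ε := by
      unfold muBG
      rw [Nat.add_sub_cancel, mul_pow, pow_succ ε]
      field_simp
    rw [e]
    rw [lt_div_iff₀ (by positivity)] at hε0
    linarith
  have hZ : 0 < HC.Zf (HC.PP d) (HC.AA d ε) (fun _ => muBG d ε) :=
    HC.Adm.Zpos _ (Λ := muBG d ε) ⟨measurable_const, fun _ => hmu0.le, fun _ => le_rfl⟩
  set J : ℝ := ∫ x, muBG d ε * h x * HC.rr (HC.PP d) (HC.AA d ε) (fun _ => muBG d ε) x ∂(HC.PP d)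
    with hJ
  have hmean : gceExp d ε (fun M W => empDens ε h M W) = (muBG d ε)⁻¹ * J := by
    rw [HC.gce_eq]
    unfold empDens
    rw [HC.mean_eq (HC.PP d) (HC.AA_meas d ε) (HC.AA_symm d ε) hmu0 hB h hh hb, ← hJ]
    field_simp
  have hfl : ∀ N (Z : Fin N → Phase d), fluctField d ε h N Z
      = (∑ i, h (Z i) - J) / Real.sqrt (muBG d ε) := by
    intro N Z
    unfold fluctField
    rw [hmean]
    unfold empDens
    rw [← mul_sub, ← mul_assoc, ← div_eq_mul_inv, Real.sqrt_div_self']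
    ring
  rw [HC.gce_eq]
  simp_rw [hfl]
  rcases hB.eq_or_lt with rfl | hB'
  · have h0 : ∀ z, h z = 0 := fun z => abs_nonpos_iff.1 (hb z)
    have hJ0 : J = 0 := by rw [hJ]; simp [h0]
    simp [h0, hJ0, show p ≠ 0 by omega]
  · have hmo := HC.moments (HC.PP d) (HC.AA_meas d ε) (HC.AA_symm d ε) hmu hB'
      (HC.ball_bd d ε hε) hδ h hh hb p J hJ
    rw [abs_mul, abs_of_pos (inv_pos.2 hZ), inv_mul_le_iff₀ hZ]
    linarith
end

section
/- (Convergence of the equal-time covariance, identifying the white-noise covariance (1.13).) Let d ≥ 2. For all bounded measurable functions h^{(1)}, h^{(2)} : 𝕋^d × ℝ^d → ℝ, the equilibrium covariance of the fluctuation field converges in the Boltzmann–Grad limit: 𝔼^eq_ε[ ζ^{ε,eq}(h^{(1)}) ζ^{ε,eq}(h^{(2)}) ] → ∫_{𝕋^d×ℝ^d} h^{(1)}(z) h^{(2)}(z) 𝓜(v) dz as ε → 0. -/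
open MeasureTheory Real

namespace HS

set_option linter.unusedSectionVars false

section abstract_part

variable {E : Type*} [MeasurableSpace E]

/-- Functionals with measurable components and exponential growth. -/
structure Good (F : (N : ℕ) → (Fin N → E) → ℝ) : Prop where
  meas : ∀ N, Measurable (F N)
  bd : ∃ C K : ℝ, 0 ≤ C ∧ 0 ≤ K ∧ ∀ N X, |F N X| ≤ C * K ^ N

theorem Good.add {F G : (N : ℕ) → (Fin N → E) → ℝ} (hF : Good F) (hG : Good G) :
    Good (fun N X => F N X + G N X) := by
  refine ⟨fun N => (hF.meas N).add (hG.meas N), ?_⟩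
  obtain ⟨C, K, hC, hK, h⟩ := hF.bd
  obtain ⟨C', K', hC', hK', h'⟩ := hG.bd
  refine ⟨C + C', K + K', by positivity, by positivity, fun N X => ?_⟩
  have h1 : K ^ N ≤ (K + K') ^ N := pow_le_pow_left₀ hK (by linarith) N
  have h2 : K' ^ N ≤ (K + K') ^ N := pow_le_pow_left₀ hK' (by linarith) N
  calc |F N X + G N X| ≤ |F N X| + |G N X| := abs_add_le _ _
    _ ≤ C * K ^ N + C' * K' ^ N := add_le_add (h N X) (h' N X)
    _ ≤ C * (K + K') ^ N + C' * (K + K') ^ N := by gcongr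
    _ = _ := by ring

theorem Good.mul {F G : (N : ℕ) → (Fin N → E) → ℝ} (hF : Good F) (hG : Good G) :
    Good (fun N X => F N X * G N X) := by
  refine ⟨fun N => (hF.meas N).mul (hG.meas N), ?_⟩
  obtain ⟨C, K, hC, hK, h⟩ := hF.bd
  obtain ⟨C', K', hC', hK', h'⟩ := hG.bd
  refine ⟨C * C', K * K', by positivity, by positivity, fun N X => ?_⟩
  rw [abs_mul, mul_pow]
  calc |F N X| * |G N X| ≤ (C * K ^ N) * (C' * K' ^ N) :=
        mul_le_mul (h N X) (h' N X) (abs_nonneg _) (by positivity)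
    _ = _ := by ring

theorem Good.const (a : ℝ) : Good (fun N (_ : Fin N → E) => a) :=
  ⟨fun _ => measurable_const, |a|, 1, abs_nonneg _, zero_le_one, fun N X => by simp⟩

theorem Good.prod {l : E → ℝ} (hl : Measurable l) {K : ℝ} (hK : ∀ x, |l x| ≤ K) :
    Good (fun N (X : Fin N → E) => ∏ i, l (X i)) := by
  refine ⟨fun N => Finset.measurable_prod _ fun i _ => hl.comp (measurable_pi_apply i), 1, |K|,
    zero_le_one, abs_nonneg _, fun N X => ?_⟩
  rw [Finset.abs_prod, one_mul]
  calc ∏ i, |l (X i)| ≤ ∏ _i : Fin N, |K| :=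
        Finset.prod_le_prod (fun _ _ => abs_nonneg _) fun i _ => (hK _).trans (le_abs_self _)
    _ = _ := by simp

theorem nat_le_two_pow (N : ℕ) : (N : ℝ) ≤ 2 ^ N := by
  exact_mod_cast (Nat.lt_two_pow_self (n := N)).le

theorem Good.sum {h : E → ℝ} (hm : Measurable h) {B : ℝ} (hB : ∀ x, |h x| ≤ B) :
    Good (fun N (X : Fin N → E) => ∑ i, h (X i)) := by
  refine ⟨fun N => Finset.measurable_sum _ fun i _ => hm.comp (measurable_pi_apply i), |B|, 2,
    abs_nonneg _, by norm_num, fun N X => ?_⟩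
  calc |∑ i, h (X i)| ≤ ∑ i, |h (X i)| := Finset.abs_sum_le_sum_abs _ _
    _ ≤ ∑ _i : Fin N, |B| := Finset.sum_le_sum fun i _ => (hB _).trans (le_abs_self _)
    _ = |B| * N := by simp [mul_comm]
    _ ≤ _ := by gcongr; exact nat_le_two_pow N

variable (ν : Measure E) [IsProbabilityMeasure ν] (z : ℝ)

/-- Unnormalised grand canonical sum. -/
noncomputable def P (F : (N : ℕ) → (Fin N → E) → ℝ) : ℝ :=
  ∑' N : ℕ, z ^ N / (Nat.factorial N : ℝ) * ∫ X, F N X ∂(Measure.pi fun _ : Fin N => ν)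

variable {z}

theorem Good.integrable {F : (N : ℕ) → (Fin N → E) → ℝ} (hF : Good F) (N : ℕ) :
    Integrable (F N) (Measure.pi fun _ : Fin N => ν) := by
  obtain ⟨C, K, hC, hK, h⟩ := hF.bd
  exact Integrable.of_bound (hF.meas N).aestronglyMeasurable (C * K ^ N)
    (Filter.Eventually.of_forall fun X => h N X)

theorem abs_int_le {N : ℕ} {f : (Fin N → E) → ℝ} {C : ℝ} (h : ∀ X, |f X| ≤ C) :
    |∫ X, f X ∂(Measure.pi fun _ : Fin N => ν)| ≤ C := by
  have := norm_integral_le_of_norm_le_const (μ := Measure.pi fun _ : Fin N => ν) (f := f) (C := C)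
    (Filter.Eventually.of_forall h)
  simpa using this

theorem summable_aux (C K : ℝ) :
    Summable (fun N : ℕ => z ^ N / (Nat.factorial N : ℝ) * (C * K ^ N)) := by
  have := (Real.summable_pow_div_factorial (z * K)).mul_left C
  refine this.congr fun N => ?_
  rw [mul_pow]; ring

theorem term_le (hz : 0 ≤ z) {N : ℕ} {x C : ℝ} (h : |x| ≤ C) :
    ‖z ^ N / (Nat.factorial N : ℝ) * x‖ ≤ z ^ N / (Nat.factorial N : ℝ) * C := by
  have : 0 ≤ z ^ N / (Nat.factorial N : ℝ) := by positivity
  rw [norm_mul, Real.norm_of_nonneg this]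
  exact mul_le_mul_of_nonneg_left h this

theorem Good.summable (hz : 0 ≤ z) {F : (N : ℕ) → (Fin N → E) → ℝ} (hF : Good F) :
    Summable (fun N : ℕ => z ^ N / (Nat.factorial N : ℝ) *
      ∫ X, F N X ∂(Measure.pi fun _ : Fin N => ν)) := by
  obtain ⟨C, K, hC, hK, h⟩ := hF.bd
  exact Summable.of_norm_bounded (summable_aux C K) fun N => term_le hz (abs_int_le ν (h N))

theorem P_add (hz : 0 ≤ z) {F G : (N : ℕ) → (Fin N → E) → ℝ} (hF : Good F) (hG : Good G) :
    P ν z (fun N X => F N X + G N X) = P ν z F + P ν z G := by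
  unfold P
  rw [← (hF.summable ν hz).tsum_add (hG.summable ν hz)]
  congr 1; ext N
  rw [integral_add (hF.integrable ν N) (hG.integrable ν N), mul_add]

theorem P_const_mul (a : ℝ) (F : (N : ℕ) → (Fin N → E) → ℝ) :
    P ν z (fun N X => a * F N X) = a * P ν z F := by
  unfold P
  rw [← tsum_mul_left]
  congr 1; ext N
  rw [integral_const_mul]; ring

theorem P_mono (hz : 0 ≤ z) {F G : (N : ℕ) → (Fin N → E) → ℝ} (hF : Good F) (hG : Good G)
    (h : ∀ N X, F N X ≤ G N X) : P ν z F ≤ P ν z G := by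
  refine (hF.summable ν hz).tsum_le_tsum (fun N => ?_) (hG.summable ν hz)
  exact mul_le_mul_of_nonneg_left
    (integral_mono (hF.integrable ν N) (hG.integrable ν N) (h N)) (by positivity)

/-- The Mecke formula. -/
theorem mecke (hz : 0 ≤ z) (G : (N : ℕ) → E → (Fin N → E) → ℝ)
    (hm : ∀ N, Measurable (Function.uncurry (G N)))
    {C K : ℝ} (hb : ∀ N w X, |G N w X| ≤ C * K ^ N)
    (F : (N : ℕ) → (Fin N → E) → ℝ) (h0 : ∀ X, F 0 X = 0)
    (hF : ∀ N X, F (N + 1) X = ∑ i, G N (X i) (i.removeNth X)) :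
    Integrable (fun w => P ν z (fun N X => G N w X)) ν ∧
    P ν z F = z * ∫ w, P ν z (fun N X => G N w X) ∂ν := by
  have hI : ∀ N, Integrable (Function.uncurry (G N)) (ν.prod (Measure.pi fun _ : Fin N => ν)) :=
    fun N => Integrable.of_bound (hm N).aestronglyMeasurable (C * K ^ N)
      (Filter.Eventually.of_forall fun p => hb N p.1 p.2)
  have hmT : ∀ N, Measurable (fun w => z ^ N / (Nat.factorial N : ℝ) *
      ∫ X, G N w X ∂(Measure.pi fun _ : Fin N => ν)) := fun N =>
    ((hm N).stronglyMeasurable.integral_prod_right).measurable.const_mul _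
  have hbT : ∀ N w, ‖z ^ N / (Nat.factorial N : ℝ) *
      ∫ X, G N w X ∂(Measure.pi fun _ : Fin N => ν)‖ ≤
      z ^ N / (Nat.factorial N : ℝ) * (C * K ^ N) := fun N w =>
    term_le hz (abs_int_le ν (hb N w))
  have hS := summable_aux (z := z) C K
  have hIT : ∀ N, Integrable (fun w => z ^ N / (Nat.factorial N : ℝ) *
      ∫ X, G N w X ∂(Measure.pi fun _ : Fin N => ν)) ν := fun N =>
    Integrable.of_bound (hmT N).aestronglyMeasurable _ (Filter.Eventually.of_forall (hbT N))
  have hstep : ∀ N, z ^ (N + 1) / (Nat.factorial (N + 1) : ℝ) *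
      ∫ X, F (N + 1) X ∂(Measure.pi fun _ : Fin (N + 1) => ν) =
      z * ∫ w, (z ^ N / (Nat.factorial N : ℝ) *
        ∫ X, G N w X ∂(Measure.pi fun _ : Fin N => ν)) ∂ν := by
    intro N
    have hone : ∀ i : Fin (N + 1),
        Integrable (fun X : Fin (N + 1) → E => G N (X i) (i.removeNth X))
          (Measure.pi fun _ : Fin (N + 1) => ν) ∧
        ∫ X, G N (X i) (i.removeNth X) ∂(Measure.pi fun _ : Fin (N + 1) => ν) =
        ∫ w, ∫ X, G N w X ∂(Measure.pi fun _ : Fin N => ν) ∂ν := by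
      intro i
      have mp := measurePreserving_piFinSuccAbove (fun _ : Fin (N + 1) => ν) i
      constructor
      · exact mp.integrable_comp_of_integrable (hI N)
      · have := mp.integral_comp' (Function.uncurry (G N))
        rw [integral_prod _ (hI N)] at this
        exact this
    simp_rw [hF N]
    rw [integral_finsetSum _ fun i _ => (hone i).1]
    simp_rw [fun i => (hone i).2]
    rw [integral_const_mul, Finset.sum_const, Finset.card_univ, Fintype.card_fin, nsmul_eq_mul,
      Nat.factorial_succ, pow_succ]
    push_cast
    field_simp
  have hsumNorm : Summable fun N => ∫ w, ‖z ^ N / (Nat.factorial N : ℝ) *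
      ∫ X, G N w X ∂(Measure.pi fun _ : Fin N => ν)‖ ∂ν := by
    refine Summable.of_nonneg_of_le (fun N => integral_nonneg fun _ => norm_nonneg _)
      (fun N => ?_) hS
    have := integral_mono (hIT N).norm (integrable_const _) (hbT N)
    simpa using this
  have hsum := hasSum_integral_of_summable_integral_norm hIT hsumNorm
  constructor
  · refine Integrable.of_bound (Measurable.tsum hmT).aestronglyMeasurable
      (∑' N : ℕ, z ^ N / (Nat.factorial N : ℝ) * (C * K ^ N)) (Filter.Eventually.of_forall fun w => ?_)
    exact tsum_of_norm_bounded hS.hasSum fun N => hbT N w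
  · have h2 := hsum.mul_left z
    simp_rw [← hstep] at h2
    have h3 := (hasSum_nat_add_iff (f := fun N => z ^ N / (Nat.factorial N : ℝ) *
      ∫ X, F N X ∂(Measure.pi fun _ : Fin N => ν)) 1).1 h2
    simp only [Finset.sum_range_one, h0, integral_zero, mul_zero, add_zero] at h3
    exact h3.tsum_eq

variable (δ : E → E → ℝ) (ε : ℝ)

open Classical in
/-- Hard-core exclusion indicator. -/
noncomputable def ex {N : ℕ} (X : Fin N → E) : ℝ :=
  if ∀ i j : Fin N, i ≠ j → ε < δ (X i) (X j) then 1 else 0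

open Classical in
/-- Non-overlap indicator. -/
noncomputable def cut (w y : E) : ℝ := if ε < δ w y then 1 else 0

/-- Partition function with variable activity. -/
noncomputable def W (ν : Measure E) (z : ℝ) (l : E → ℝ) : ℝ :=
  P ν z (fun _ X => ex δ ε X * ∏ i, l (X i))

theorem cut_mem (w y : E) : 0 ≤ cut δ ε w y ∧ cut δ ε w y ≤ 1 := by
  unfold cut; split_ifs <;> simp

theorem ex_mem {N : ℕ} (X : Fin N → E) : 0 ≤ ex δ ε X ∧ ex δ ε X ≤ 1 := by
  unfold ex; split_ifs <;> simp

theorem ex_succ (hs : ∀ x y, δ x y = δ y x) {N : ℕ} (X : Fin (N + 1) → E) (i : Fin (N + 1)) :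
    ex δ ε X = ex δ ε (i.removeNth X) * ∏ j, cut δ ε (X i) (i.removeNth X j) := by
  classical
  unfold ex cut
  rw [Finset.prod_ite_zero, Finset.prod_const_one]
  simp only [Finset.mem_univ, true_imp_iff, ← ite_and, mul_ite, mul_one, mul_zero]
  congr 1
  rw [Fin.forall_iff_succAbove i, eq_iff_iff, Fin.forall_iff_succAbove i]
  simp only [ne_eq, not_true_eq_false, false_imp_iff, true_and, Fin.removeNth]
  constructor
  · rintro ⟨h1, h2⟩
    refine ⟨fun j => h1 j (Fin.ne_succAbove i j), fun j k hjk => ?_⟩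
    exact h2 j (i.succAbove k) (fun h => hjk (Fin.succAbove_right_injective h))
  · rintro ⟨h1, h2⟩
    refine ⟨fun j _ => h1 j, fun j => ?_⟩
    rw [Fin.forall_iff_succAbove i]
    refine ⟨fun _ => by rw [hs]; exact h1 j, fun k hjk => h2 j k fun h => hjk (by rw [h])⟩

variable {δ}

theorem cut_meas2 (hδ : Measurable (Function.uncurry δ)) :
    Measurable (Function.uncurry (cut δ ε)) := by
  classical
  exact Measurable.ite (measurableSet_lt measurable_const hδ) measurable_const measurable_const

theorem cut_meas (hδ : Measurable (Function.uncurry δ)) (w : E) : Measurable (cut δ ε w) :=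
  (cut_meas2 ε hδ).comp measurable_prodMk_left

theorem ex_good (hδ : Measurable (Function.uncurry δ)) :
    Good (fun _ (X : Fin _ → E) => ex δ ε X) := by
  classical
  refine ⟨fun N => ?_, 1, 1, zero_le_one, zero_le_one, fun N X => ?_⟩
  · refine Measurable.ite ?_ measurable_const measurable_const
    simp only [Set.ofPred_forall]
    refine MeasurableSet.iInter fun i => MeasurableSet.iInter fun j => MeasurableSet.iInter fun _ =>
      measurableSet_lt measurable_const ?_
    have h := hδ.comp ((measurable_pi_apply (X := fun _ : Fin N => E) i).prodMk (measurable_pi_apply j))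
    exact h
  · have := ex_mem δ ε X
    rw [abs_of_nonneg this.1]; simpa using this.2

theorem W_good (hδ : Measurable (Function.uncurry δ)) {l : E → ℝ} (hl : Measurable l) {K : ℝ}
    (hK : ∀ x, |l x| ≤ K) : Good (fun _ (X : Fin _ → E) => ex δ ε X * ∏ i, l (X i)) :=
  (ex_good ε hδ).mul (Good.prod hl hK)

theorem prod_erase_succAbove {N : ℕ} (f : Fin (N + 1) → ℝ) (i : Fin (N + 1)) :
    ∏ j ∈ Finset.univ.erase i, f j = ∏ j, f (i.succAbove j) := by
  rw [Fin.univ_succAbove N i, Finset.erase_cons, Finset.prod_map]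
  rfl

theorem lin (hδ : Measurable (Function.uncurry δ)) (hs : ∀ x y, δ x y = δ y x) (hz : 0 ≤ z)
    {b c : E → ℝ} (hbm : Measurable b) (hcm : Measurable c) {B K : ℝ}
    (hb : ∀ x, |b x| ≤ B) (hc : ∀ x, |c x| ≤ K) :
    Integrable (fun w => b w * W δ ε ν z (fun y => c y * cut δ ε w y)) ν ∧
    P ν z (fun _ X => ex δ ε X * ∑ i, (∏ j ∈ Finset.univ.erase i, c (X j)) * b (X i)) =
      z * ∫ w, b w * W δ ε ν z (fun y => c y * cut δ ε w y) ∂ν := by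
  have := mecke ν hz (fun N w X => b w * (ex δ ε X * ∏ j, (c (X j) * cut δ ε w (X j)))) ?_
    (C := |B|) (K := |K|) ?_
    (fun _ X => ex δ ε X * ∑ i, (∏ j ∈ Finset.univ.erase i, c (X j)) * b (X i)) ?_ ?_
  · simp only [P_const_mul] at this
    exact this
  · intro N
    refine (hbm.comp measurable_fst).mul ((((ex_good ε hδ).meas N).comp measurable_snd).mul ?_)
    refine Finset.measurable_prod _ fun j _ => ?_
    refine (hcm.comp ((measurable_pi_apply j).comp measurable_snd)).mul ?_
    exact (cut_meas2 ε hδ).comp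
      (measurable_fst.prodMk ((measurable_pi_apply j).comp measurable_snd))
  · intro N w X
    rw [abs_mul, abs_mul, Finset.abs_prod, abs_of_nonneg (ex_mem δ ε X).1]
    have h1 : ∏ j, |c (X j) * cut δ ε w (X j)| ≤ |K| ^ N := by
      calc _ ≤ ∏ _j : Fin N, |K| := by
            refine Finset.prod_le_prod (fun _ _ => abs_nonneg _) fun i _ => ?_
            rw [abs_mul, abs_of_nonneg (cut_mem δ ε w (X i)).1]
            have h2 := (hc (X i)).trans (le_abs_self K)
            have := cut_mem δ ε w (X i)
            nlinarith [abs_nonneg (c (X i))]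
        _ = _ := by simp
    have h3 : 0 ≤ ∏ j, |c (X j) * cut δ ε w (X j)| := Finset.prod_nonneg fun _ _ => abs_nonneg _
    have h4 := ex_mem δ ε X
    calc |b w| * (ex δ ε X * ∏ j, |c (X j) * cut δ ε w (X j)|)
        ≤ |B| * (1 * |K| ^ N) := by
          refine mul_le_mul ((hb w).trans (le_abs_self _)) ?_ (mul_nonneg h4.1 h3) (abs_nonneg _)
          exact mul_le_mul h4.2 h1 h3 zero_le_one
      _ = _ := by ring
  · intro X; simp
  · intro N X
    rw [Finset.mul_sum]
    refine Finset.sum_congr rfl fun i _ => ?_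
    rw [ex_succ δ ε hs X i, prod_erase_succAbove, Finset.prod_mul_distrib]
    simp only [Fin.removeNth]
    ring

theorem one_le_W (hδ : Measurable (Function.uncurry δ)) (hz : 0 ≤ z)
    {l : E → ℝ} (hl : Measurable l) (h01 : ∀ x, 0 ≤ l x ∧ l x ≤ 1) : 1 ≤ W δ ε ν z l := by
  have hg := W_good ε hδ hl (K := 1) fun x => abs_le.2 ⟨by linarith [(h01 x).1], (h01 x).2⟩
  have := (hg.summable ν hz).le_tsum 0 fun N _ => mul_nonneg (by positivity)
    (integral_nonneg fun X => mul_nonneg (ex_mem δ ε X).1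
      (Finset.prod_nonneg fun i _ => (h01 _).1))
  refine le_trans (le_of_eq ?_) this
  simp [ex]

theorem W_mono (hδ : Measurable (Function.uncurry δ)) (hz : 0 ≤ z)
    {l l' : E → ℝ} (hl : Measurable l) (hl' : Measurable l') (h0 : ∀ x, 0 ≤ l x)
    (hle : ∀ x, l x ≤ l' x) (h1 : ∀ x, l' x ≤ 1) : W δ ε ν z l ≤ W δ ε ν z l' := by
  refine P_mono ν hz (W_good ε hδ hl (K := 1) fun x => ?_) (W_good ε hδ hl' (K := 1) fun x => ?_) ?_
  · exact abs_le.2 ⟨by linarith [h0 x], (hle x).trans (h1 x)⟩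
  · exact abs_le.2 ⟨by linarith [h0 x, hle x], h1 x⟩
  · intro N X
    exact mul_le_mul_of_nonneg_left (Finset.prod_le_prod (fun _ _ => h0 _) fun _ _ => hle _)
      (ex_mem δ ε X).1

theorem W_deriv (hδ : Measurable (Function.uncurry δ)) (hs : ∀ x y, δ x y = δ y x) (hz : 0 ≤ z)
    {a b : E → ℝ} (ham : Measurable a) (hbm : Measurable b)
    (ha : ∀ x, |a x| ≤ 1) (hb : ∀ x, |b x| ≤ 1) {t : ℝ} (ht : t ∈ Set.Icc (0 : ℝ) 1) :
    HasDerivAt (fun t => W δ ε ν z (fun y => a y + t * b y))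
      (z * ∫ w, b w * W δ ε ν z (fun y => (a y + t * b y) * cut δ ε w y) ∂ν) t := by
  have hbd : ∀ s ∈ Set.Ioo (-1 : ℝ) 2, ∀ x, |a x + s * b x| ≤ 3 := by
    intro s hs x
    have h1 := abs_le.1 (ha x)
    have h2 := abs_le.1 (hb x)
    have h3 : |s * b x| ≤ 2 := by
      rw [abs_mul]
      have : |s| ≤ 2 := abs_le.2 ⟨by linarith [hs.1], hs.2.le⟩
      nlinarith [hb x, abs_nonneg s, abs_nonneg (b x)]
    have := abs_add_le (a x) (s * b x)
    linarith [ha x]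
  have hmm : ∀ s : ℝ, Measurable (fun y => a y + s * b y) := fun s => ham.add (hbm.const_mul s)
  have ht' : t ∈ Set.Ioo (-1 : ℝ) 2 := ⟨by linarith [ht.1], by linarith [ht.2]⟩
  rw [← (lin ν ε hδ hs hz hbm (hmm t) hb (hbd t ht')).2]
  have hFb : ∀ N, ∀ s ∈ Set.Ioo (-1 : ℝ) 2, ∀ X : Fin N → E,
      |ex δ ε X * ∑ i, (∏ j ∈ Finset.univ.erase i, (a (X j) + s * b (X j))) * b (X i)| ≤
      1 * 6 ^ N := by
    intro N s hs X
    rw [abs_mul, abs_of_nonneg (ex_mem δ ε X).1]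
    have h1 : |∑ i, (∏ j ∈ Finset.univ.erase i, (a (X j) + s * b (X j))) * b (X i)| ≤ 6 ^ N := by
      calc _ ≤ ∑ i, |(∏ j ∈ Finset.univ.erase i, (a (X j) + s * b (X j))) * b (X i)| :=
            Finset.abs_sum_le_sum_abs _ _
        _ ≤ ∑ _i : Fin N, (3 : ℝ) ^ N := by
            refine Finset.sum_le_sum fun i _ => ?_
            rw [abs_mul, Finset.abs_prod]
            have h2 : ∏ j ∈ Finset.univ.erase i, |a (X j) + s * b (X j)| ≤ 3 ^ N := by
              calc _ ≤ ∏ _j ∈ Finset.univ.erase i, (3 : ℝ) :=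
                    Finset.prod_le_prod (fun _ _ => abs_nonneg _) fun j _ => hbd s hs _
                _ = 3 ^ (Finset.univ.erase i).card := by simp
                _ ≤ 3 ^ N := by
                    refine pow_le_pow_right₀ (by norm_num) ?_
                    refine (Finset.card_le_univ _).trans ?_
                    simp
            have h3 : 0 ≤ ∏ j ∈ Finset.univ.erase i, |a (X j) + s * b (X j)| :=
              Finset.prod_nonneg fun _ _ => abs_nonneg _
            nlinarith [hb (X i), abs_nonneg (b (X i))]
        _ = N * 3 ^ N := by simp
        _ ≤ 2 ^ N * 3 ^ N := by gcongr; exact nat_le_two_pow N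
        _ = 6 ^ N := by rw [← mul_pow]; norm_num
    have := ex_mem δ ε X
    nlinarith [abs_nonneg (∑ i, (∏ j ∈ Finset.univ.erase i, (a (X j) + s * b (X j))) * b (X i))]
  refine hasDerivAt_tsum_of_isPreconnected (u := fun N => z ^ N / (Nat.factorial N : ℝ) * (1 * 6 ^ N))
    (g := fun N s => z ^ N / (Nat.factorial N : ℝ) *
      ∫ X, ex δ ε X * ∏ i, (a (X i) + s * b (X i)) ∂(Measure.pi fun _ : Fin N => ν))
    (g' := fun N s => z ^ N / (Nat.factorial N : ℝ) *
      ∫ X, ex δ ε X * ∑ i, (∏ j ∈ Finset.univ.erase i, (a (X j) + s * b (X j))) * b (X i)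
        ∂(Measure.pi fun _ : Fin N => ν))
    (summable_aux 1 6) (isOpen_Ioo (a := (-1 : ℝ)) (b := 2)) isPreconnected_Ioo ?_ ?_ ht' ?_ ht'
  · intro N s hs
    refine HasDerivAt.const_mul _ ?_
    refine (hasDerivAt_integral_of_dominated_loc_of_deriv_le (bound := fun _ => 1 * 6 ^ N)
      (F := fun s X => ex δ ε X * ∏ i, (a (X i) + s * b (X i)))
      (F' := fun s X => ex δ ε X *
        ∑ i, (∏ j ∈ Finset.univ.erase i, (a (X j) + s * b (X j))) * b (X i))
      (isOpen_Ioo.mem_nhds hs) ?_ ?_ ?_ ?_ ?_ ?_).2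
    · filter_upwards [isOpen_Ioo.mem_nhds hs] with r hr
      exact ((W_good ε hδ (hmm r) (hbd r hr)).meas N).aestronglyMeasurable
    · exact (W_good ε hδ (hmm s) (hbd s hs)).integrable ν N
    · refine Measurable.aestronglyMeasurable (((ex_good ε hδ).meas N).mul ?_)
      refine Finset.measurable_sum _ fun i _ => Measurable.mul ?_ (hbm.comp (measurable_pi_apply i))
      exact Finset.measurable_prod _ fun j _ => (hmm s).comp (measurable_pi_apply j)
    · exact Filter.Eventually.of_forall fun X r hr => hFb N r hr X
    · exact integrable_const _
    · refine Filter.Eventually.of_forall fun X r hr => HasDerivAt.const_mul _ ?_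
      have := HasDerivAt.fun_finsetProd (u := Finset.univ) (f := fun i s => a (X i) + s * b (X i))
        (f' := fun i => b (X i)) (x := r) (fun i _ => by
          simpa using ((hasDerivAt_id r).mul_const (b (X i))).const_add (a (X i)))
      simpa only [smul_eq_mul] using this
  · intro N s hs
    exact term_le hz (abs_int_le ν (hFb N s hs))
  · exact (W_good ε hδ (hmm t) (hbd t ht')).summable ν hz

/-- Ratio of partition functions. -/
noncomputable def Q (δ : E → E → ℝ) (ε : ℝ) (ν : Measure E) (z : ℝ) (l : E → ℝ) (w : E) : ℝ :=
  W δ ε ν z (fun y => l y * cut δ ε w y) / W δ ε ν z l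

/-- Measurable functions with values in the unit interval. -/
def Unit01 (l : E → ℝ) : Prop := Measurable l ∧ ∀ x, 0 ≤ l x ∧ l x ≤ 1

theorem Unit01.mul {l m : E → ℝ} (hl : Unit01 l) (hm : Unit01 m) : Unit01 (fun y => l y * m y) :=
  ⟨hl.1.mul hm.1, fun x => ⟨mul_nonneg (hl.2 x).1 (hm.2 x).1,
    mul_le_one₀ (hl.2 x).2 (hm.2 x).1 (hm.2 x).2⟩⟩

theorem Unit01.abs_le {l : E → ℝ} (hl : Unit01 l) (x : E) : |l x| ≤ 1 := by
  rw [abs_of_nonneg (hl.2 x).1]; exact (hl.2 x).2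

theorem unit01_cut (hδ : Measurable (Function.uncurry δ)) (w : E) : Unit01 (cut δ ε w) :=
  ⟨cut_meas ε hδ w, cut_mem δ ε w⟩

theorem unit01_one : Unit01 (fun _ : E => (1 : ℝ)) := ⟨measurable_const, fun _ => by norm_num⟩

theorem unit01_compl (hδ : Measurable (Function.uncurry δ)) (w : E) :
    Unit01 (fun y => 1 - cut δ ε w y) :=
  ⟨(cut_meas ε hδ w).const_sub 1, fun y => by
    have := cut_mem δ ε w y
    constructor <;> linarith⟩

theorem W_pos (hδ : Measurable (Function.uncurry δ)) (hz : 0 ≤ z)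
    {l : E → ℝ} (hl : Unit01 l) : 0 < W δ ε ν z l :=
  lt_of_lt_of_le one_pos (one_le_W ν ε hδ hz hl.1 hl.2)

theorem Q_mem (hδ : Measurable (Function.uncurry δ)) (hz : 0 ≤ z)
    {l : E → ℝ} (hl : Unit01 l) (w : E) : 0 < Q δ ε ν z l w ∧ Q δ ε ν z l w ≤ 1 := by
  have h1 := W_pos ν ε hδ hz hl
  have hm := hl.mul (unit01_cut ε hδ w)
  have h2 := W_pos ν ε hδ hz hm
  refine ⟨div_pos h2 h1, (div_le_one h1).2 ?_⟩
  refine W_mono ν ε hδ hz hm.1 hl.1 (fun x => (hm.2 x).1) (fun x => ?_) fun x => (hl.2 x).2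
  have := cut_mem δ ε w x
  nlinarith [(hl.2 x).1]

theorem int_bound (hδ : Measurable (Function.uncurry δ)) {β : ℝ}
    (hβ : ∀ x, ν.real {y | δ x y ≤ ε} ≤ β) (x : E) {f : E → ℝ} {M : ℝ} (hM : 0 ≤ M)
    (hf : ∀ w, |f w| ≤ M * (1 - cut δ ε x w)) : |∫ w, f w ∂ν| ≤ M * β := by
  have hint : Integrable (fun w => M * (1 - cut δ ε x w)) ν := by
    refine Integrable.const_mul (Integrable.of_bound
      (unit01_compl ε hδ x).1.aestronglyMeasurable 1 (Filter.Eventually.of_forall fun w => ?_)) _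
    exact (unit01_compl ε hδ x).abs_le w
  have h1 := norm_integral_le_of_norm_le (f := f) hint (Filter.Eventually.of_forall hf)
  refine h1.trans ?_
  rw [integral_const_mul]
  refine mul_le_mul_of_nonneg_left ?_ hM
  have hms : MeasurableSet {y | δ x y ≤ ε} :=
    measurableSet_le (hδ.comp measurable_prodMk_left) measurable_const
  have : (fun w => 1 - cut δ ε x w) = Set.indicator {y | δ x y ≤ ε} 1 := by
    classical
    ext w
    by_cases h : δ x w ≤ ε
    · have h' : ¬ ε < δ x w := not_lt.2 h
      rw [Set.indicator_of_mem (show w ∈ {y | δ x y ≤ ε} from h)]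
      simp [cut, h']
    · have h' : ε < δ x w := not_le.1 h
      rw [Set.indicator_of_notMem (show w ∉ {y | δ x y ≤ ε} from h)]
      simp [cut, h']
  rw [this, integral_indicator_one hms]
  exact hβ x

/-- Interpolating activity. -/
noncomputable def path (δ : E → E → ℝ) (ε : ℝ) (l : E → ℝ) (x : E) (t : ℝ) (y : E) : ℝ :=
  l y * cut δ ε x y + t * (l y * (1 - cut δ ε x y))

theorem path_unit (hδ : Measurable (Function.uncurry δ)) {l : E → ℝ} (hl : Unit01 l) (x : E)
    {t : ℝ} (ht : t ∈ Set.Icc (0 : ℝ) 1) : Unit01 (path δ ε l x t) := by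
  refine ⟨(hl.mul (unit01_cut ε hδ x)).1.add
    (((hl.mul (unit01_compl ε hδ x)).1).const_mul t), fun y => ?_⟩
  have h1 := (hl.mul (unit01_cut ε hδ x)).2 y
  have h2 := (hl.mul (unit01_compl ε hδ x)).2 y
  have h3 := hl.2 y
  unfold path
  dsimp only at h1 h2
  constructor
  · nlinarith [ht.1]
  · nlinarith [ht.2]

theorem log_deriv (hδ : Measurable (Function.uncurry δ)) (hs : ∀ x y, δ x y = δ y x) (hz : 0 ≤ z)
    {l : E → ℝ} (hl : Unit01 l) (x : E) {t : ℝ} (ht : t ∈ Set.Icc (0 : ℝ) 1) :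
    Integrable (fun w => l w * (1 - cut δ ε x w) * Q δ ε ν z (path δ ε l x t) w) ν ∧
    HasDerivAt (fun t => Real.log (W δ ε ν z (path δ ε l x t)))
      (z * ∫ w, l w * (1 - cut δ ε x w) * Q δ ε ν z (path δ ε l x t) w ∂ν) t := by
  have ha := hl.mul (unit01_cut ε hδ x)
  have hb := hl.mul (unit01_compl ε hδ x)
  have hp := path_unit ε hδ hl x ht
  have hW := W_pos ν ε hδ hz hp
  have h1 := (W_deriv ν ε hδ hs hz ha.1 hb.1 ha.abs_le hb.abs_le ht).log hW.ne'
  have h2 := (lin ν ε hδ hs hz hb.1 hp.1 hb.abs_le hp.abs_le).1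
  constructor
  · refine (h2.div_const (W δ ε ν z (path δ ε l x t))).congr
      (Filter.Eventually.of_forall fun w => ?_)
    simp only [Q]; ring
  · have e : z * ∫ w, l w * (1 - cut δ ε x w) * Q δ ε ν z (path δ ε l x t) w ∂ν =
        (z * ∫ w, l w * (1 - cut δ ε x w) *
          W δ ε ν z (fun y => path δ ε l x t y * cut δ ε w y) ∂ν) /
        W δ ε ν z (path δ ε l x t) := by
      rw [mul_div_assoc, ← integral_div]
      simp only [Q, mul_div_assoc]
    rw [e]
    exact h1

theorem path_zero (l : E → ℝ) (x : E) : path δ ε l x 0 = fun y => l y * cut δ ε x y := by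
  ext y; simp [path]

theorem path_one (l : E → ℝ) (x : E) : path δ ε l x 1 = l := by
  ext y; simp only [path]; ring

theorem sub_le_log_sub {p q : ℝ} (hq : 0 < q) (hqp : q ≤ p) (hp : p ≤ 1) :
    p - q ≤ Real.log p - Real.log q := by
  have hp0 : 0 < p := hq.trans_le hqp
  have h := Real.log_le_sub_one_of_pos (div_pos hq hp0)
  rw [Real.log_div hq.ne' hp0.ne'] at h
  have h2 : q / p - 1 ≤ q - p := by
    rw [div_sub_one hp0.ne', div_le_iff₀ hp0]
    nlinarith
  linarith

theorem abs_sub_le_log {p q : ℝ} (hq : 0 < q) (hq1 : q ≤ 1) (hp : 0 < p) (hp1 : p ≤ 1) :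
    |p - q| ≤ |Real.log p - Real.log q| := by
  rcases le_total q p with h | h
  · rw [abs_of_nonneg (by linarith)]
    exact (sub_le_log_sub hq h hp1).trans (le_abs_self _)
  · rw [abs_sub_comm, abs_of_nonneg (by linarith), abs_sub_comm]
    exact (sub_le_log_sub hp h hq1).trans (le_abs_self _)

theorem log_Q (hδ : Measurable (Function.uncurry δ)) (hz : 0 ≤ z)
    {l : E → ℝ} (hl : Unit01 l) (x : E) : Real.log (Q δ ε ν z l x) =
      Real.log (W δ ε ν z (path δ ε l x 0)) - Real.log (W δ ε ν z (path δ ε l x 1)) := by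
  rw [path_zero, path_one, Q, Real.log_div (W_pos ν ε hδ hz (hl.mul (unit01_cut ε hδ x))).ne'
    (W_pos ν ε hδ hz hl).ne']

theorem one_sub_Q (hδ : Measurable (Function.uncurry δ)) (hs : ∀ x y, δ x y = δ y x) (hz : 0 ≤ z)
    {β : ℝ} (hβ : ∀ x, ν.real {y | δ x y ≤ ε} ≤ β) {l : E → ℝ} (hl : Unit01 l) (x : E) :
    1 - Q δ ε ν z l x ≤ z * β := by
  have hQ := Q_mem ν ε hδ hz hl x
  have h1 := sub_le_log_sub hQ.1 hQ.2 le_rfl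
  rw [Real.log_one, log_Q ν ε hδ hz hl] at h1
  have := Convex.norm_image_sub_le_of_norm_hasDerivWithin_le (C := z * β)
    (f := fun t => Real.log (W δ ε ν z (path δ ε l x t))) (s := Set.Icc (0 : ℝ) 1)
    (fun t ht => ((log_deriv ν ε hδ hs hz hl x ht).2).hasDerivWithinAt) ?_ (convex_Icc 0 1)
    (x := 0) (y := 1) (by simp) (by simp)
  · have h2 := (le_abs_self _).trans this
    simp only [sub_zero, norm_one, mul_one] at h2
    linarith
  · intro t ht
    rw [norm_mul, Real.norm_of_nonneg hz]
    refine mul_le_mul_of_nonneg_left ?_ hz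
    have := int_bound ν ε hδ hβ x (M := 1) zero_le_one
      (f := fun w => l w * (1 - cut δ ε x w) * Q δ ε ν z (path δ ε l x t) w) fun w => ?_
    · simpa using this
    have h3 := Q_mem ν ε hδ hz (path_unit ε hδ hl x ht) w
    have h4 := (unit01_compl ε hδ x).2 w
    rw [abs_mul, abs_mul, abs_of_nonneg h3.1.le, abs_of_nonneg (hl.2 w).1, abs_of_nonneg h4.1]
    calc _ ≤ 1 * (1 - cut δ ε x w) * 1 := by
          refine mul_le_mul (mul_le_mul_of_nonneg_right (hl.2 w).2 h4.1) h3.2 h3.1.le ?_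
          linarith [h4.1]
      _ = _ := by ring

theorem decay (hδ : Measurable (Function.uncurry δ)) (hs : ∀ x y, δ x y = δ y x)
    (htri : ∀ x y w, δ x w ≤ δ x y + δ y w) (hε : 0 ≤ ε) (hz : 0 ≤ z)
    {β : ℝ} (hβ0 : 0 ≤ β) (hβ : ∀ x, ν.real {y | δ x y ≤ ε} ≤ β) (k : ℕ) :
    ∀ (x : E) (l l' : E → ℝ), Unit01 l → Unit01 l' → (∀ y, δ x y ≤ (k + 1) * ε → l y = l' y) →
      |Q δ ε ν z l x - Q δ ε ν z l' x| ≤ (z * β) ^ k := by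
  induction k with
  | zero =>
    intro x l l' hl hl' _
    have h1 := Q_mem ν ε hδ hz hl x
    have h2 := Q_mem ν ε hδ hz hl' x
    rw [pow_zero, abs_le]
    constructor <;> linarith [h1.1, h1.2, h2.1, h2.2]
  | succ k ih =>
    intro x l l' hl hl' hag
    have hQ := Q_mem ν ε hδ hz hl x
    have hQ' := Q_mem ν ε hδ hz hl' x
    refine (abs_sub_le_log hQ'.1 hQ'.2 hQ.1 hQ.2).trans ?_
    rw [log_Q ν ε hδ hz hl, log_Q ν ε hδ hz hl']
    have := Convex.norm_image_sub_le_of_norm_hasDerivWithin_le (C := (z * β) ^ (k + 1))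
      (f := fun t => Real.log (W δ ε ν z (path δ ε l x t)) -
        Real.log (W δ ε ν z (path δ ε l' x t))) (s := Set.Icc (0 : ℝ) 1)
      (fun t ht => ((log_deriv ν ε hδ hs hz hl x ht).2.sub
        (log_deriv ν ε hδ hs hz hl' x ht).2).hasDerivWithinAt) ?_ (convex_Icc 0 1)
      (x := 1) (y := 0) (by simp) (by simp)
    · simp only [zero_sub, norm_neg, norm_one, mul_one] at this
      rw [Real.norm_eq_abs] at this
      rw [abs_le] at this ⊢
      constructor <;> linarith [this.1, this.2]
    · intro t ht
      rw [← mul_sub, ← integral_sub (log_deriv ν ε hδ hs hz hl x ht).1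
        (log_deriv ν ε hδ hs hz hl' x ht).1, norm_mul, Real.norm_of_nonneg hz]
      have := int_bound ν ε hδ hβ x (M := (z * β) ^ k) (by positivity)
        (f := fun w => l w * (1 - cut δ ε x w) * Q δ ε ν z (path δ ε l x t) w -
          l' w * (1 - cut δ ε x w) * Q δ ε ν z (path δ ε l' x t) w) fun w => ?_
      · calc z * _ ≤ z * ((z * β) ^ k * β) := mul_le_mul_of_nonneg_left this hz
          _ = _ := by ring
      by_cases hw : ε < δ x w
      · simp [cut, hw]
      have hw := not_lt.1 hw
      have hk : (0 : ℝ) ≤ k := Nat.cast_nonneg k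
      have hll : l w = l' w := hag w (hw.trans (by push_cast; nlinarith))
      have h4 := (unit01_compl ε hδ x).2 w
      have h5 := ih w (path δ ε l x t) (path δ ε l' x t) (path_unit ε hδ hl x ht)
        (path_unit ε hδ hl' x ht) (fun y hy => by
          have : l y = l' y := hag y (by
            have := htri x w y
            push_cast
            nlinarith)
          simp only [path, this])
      rw [← hll, ← mul_sub, abs_mul, abs_mul, abs_of_nonneg (hl.2 w).1, abs_of_nonneg h4.1]
      calc _ ≤ 1 * (1 - cut δ ε x w) * (z * β) ^ k := by
            refine mul_le_mul (mul_le_mul_of_nonneg_right (hl.2 w).2 h4.1) h5 (abs_nonneg _) ?_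
            linarith [h4.1]
        _ = _ := by ring

theorem one_point (hδ : Measurable (Function.uncurry δ)) (hs : ∀ x y, δ x y = δ y x) (hz : 0 ≤ z)
    {h : E → ℝ} (hm : Measurable h) {B : ℝ} (hB : ∀ x, |h x| ≤ B) :
    Integrable (fun w => h w * Q δ ε ν z (fun _ => 1) w) ν ∧
    P ν z (fun _ X => ex δ ε X * ∑ i, h (X i)) =
      W δ ε ν z (fun _ => 1) * (z * ∫ w, h w * Q δ ε ν z (fun _ => 1) w ∂ν) := by
  have h1 := lin ν ε hδ hs hz hm measurable_const (c := fun _ => 1) (K := 1) hB (by simp)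
  have hW := W_pos ν ε hδ hz (unit01_one (E := E))
  have e : ∀ w, h w * W δ ε ν z (fun y => 1 * cut δ ε w y) =
      W δ ε ν z (fun _ => 1) * (h w * Q δ ε ν z (fun _ => 1) w) := by
    intro w; simp only [Q]; field_simp
  simp only [e, integral_const_mul] at h1
  simp only [Finset.prod_const_one, one_mul] at h1
  refine ⟨?_, by rw [h1.2]; ring⟩
  have := h1.1.const_mul (W δ ε ν z (fun _ => 1))⁻¹
  refine this.congr (Filter.Eventually.of_forall fun w => ?_)
  simp only
  field_simp

theorem one_point_cut (hδ : Measurable (Function.uncurry δ)) (hs : ∀ x y, δ x y = δ y x)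
    (hz : 0 ≤ z) {c : E → ℝ} (hc : Unit01 c)
    {h : E → ℝ} (hm : Measurable h) {B : ℝ} (hB : ∀ x, |h x| ≤ B) :
    Integrable (fun w => h w * (c w * Q δ ε ν z c w)) ν ∧
    P ν z (fun _ X => (∑ i, h (X i)) * (ex δ ε X * ∏ i, c (X i))) =
      W δ ε ν z c * (z * ∫ w, h w * (c w * Q δ ε ν z c w) ∂ν) := by
  have h1 := lin ν ε hδ hs hz (hm.mul hc.1) hc.1 (K := 1) (B := B) (fun x => by
      simp only [Pi.mul_apply]
      rw [abs_mul]
      nlinarith [hB x, hc.abs_le x, abs_nonneg (h x), abs_nonneg (c x)]) hc.abs_le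
  have hW := W_pos ν ε hδ hz hc
  have e : ∀ w, (h * c) w * W δ ε ν z (fun y => c y * cut δ ε w y) =
      W δ ε ν z c * (h w * (c w * Q δ ε ν z c w)) := by
    intro w; simp only [Q, Pi.mul_apply]; field_simp
  have e2 : ∀ (N : ℕ) (X : Fin N → E),
      ex δ ε X * ∑ i, (∏ j ∈ Finset.univ.erase i, c (X j)) * (h * c) (X i) =
      (∑ i, h (X i)) * (ex δ ε X * ∏ i, c (X i)) := by
    intro N X
    rw [mul_left_comm, Finset.sum_mul]
    congr 1
    refine Finset.sum_congr rfl fun i _ => ?_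
    rw [← Finset.prod_erase_mul _ _ (Finset.mem_univ i), Pi.mul_apply]
    ring
  simp only [e, e2, integral_const_mul] at h1
  refine ⟨?_, by rw [h1.2]; ring⟩
  have := h1.1.const_mul (W δ ε ν z c)⁻¹
  refine this.congr (Filter.Eventually.of_forall fun w => ?_)
  simp only
  field_simp

theorem two_point (hδ : Measurable (Function.uncurry δ)) (hs : ∀ x y, δ x y = δ y x) (hz : 0 ≤ z)
    {h₁ h₂ : E → ℝ} (hm₁ : Measurable h₁) (hm₂ : Measurable h₂) {B₁ B₂ : ℝ}
    (hB₁ : ∀ x, |h₁ x| ≤ B₁) (hB₂ : ∀ x, |h₂ x| ≤ B₂) (h0₁ : 0 ≤ B₁) (h0₂ : 0 ≤ B₂) :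
    Integrable (fun w => h₁ w * Q δ ε ν z (fun _ => 1) w * (h₂ w + z * ∫ w', h₂ w' *
      (cut δ ε w w' * Q δ ε ν z (cut δ ε w) w') ∂ν)) ν ∧
    P ν z (fun _ X => ex δ ε X * ((∑ i, h₁ (X i)) * ∑ i, h₂ (X i))) =
      W δ ε ν z (fun _ => 1) * (z * ∫ w, h₁ w * Q δ ε ν z (fun _ => 1) w * (h₂ w + z * ∫ w', h₂ w' *
      (cut δ ε w w' * Q δ ε ν z (cut δ ε w) w') ∂ν) ∂ν) := by
  have hW := W_pos ν ε hδ hz (unit01_one (E := E))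
  have h1 := mecke ν hz (fun N w X => h₁ w * (h₂ w * (ex δ ε X * ∏ j, cut δ ε w (X j)) +
      (∑ j, h₂ (X j)) * (ex δ ε X * ∏ j, cut δ ε w (X j)))) ?_
    (C := B₁ * B₂) (K := 2) ?_
    (fun _ X => ex δ ε X * ((∑ i, h₁ (X i)) * ∑ i, h₂ (X i))) ?_ ?_
  · have e : ∀ w, P ν z (fun N X => h₁ w * (h₂ w * (ex δ ε X * ∏ j, cut δ ε w (X j)) +
      (∑ j, h₂ (X j)) * (ex δ ε X * ∏ j, cut δ ε w (X j)))) =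
      W δ ε ν z (fun _ => 1) * (h₁ w * Q δ ε ν z (fun _ => 1) w * (h₂ w + z * ∫ w', h₂ w' *
      (cut δ ε w w' * Q δ ε ν z (cut δ ε w) w') ∂ν)) := by
      intro w
      have hc := unit01_cut ε hδ w
      have hg := W_good ε hδ hc.1 hc.abs_le
      rw [P_const_mul, P_add ν hz ((Good.const (h₂ w)).mul hg) ((Good.sum hm₂ hB₂).mul hg),
        P_const_mul, (one_point_cut ν ε hδ hs hz hc hm₂ hB₂).2]
      have : W δ ε ν z (cut δ ε w) = W δ ε ν z (fun _ => 1) * Q δ ε ν z (fun _ => 1) w := by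
        simp only [Q, one_mul]
        rw [mul_div_cancel₀ _ hW.ne']
      change h₁ w * (h₂ w * W δ ε ν z (cut δ ε w) + _) = _
      rw [this]
      ring
    simp only [e, integral_const_mul] at h1
    refine ⟨?_, by rw [h1.2]; ring⟩
    have := h1.1.const_mul (W δ ε ν z (fun _ => 1))⁻¹
    refine this.congr (Filter.Eventually.of_forall fun w => ?_)
    simp only
    rw [inv_mul_cancel_left₀ hW.ne']
  · intro N
    have hp : Measurable (fun p : E × (Fin N → E) => ex δ ε p.2 * ∏ j, cut δ ε p.1 (p.2 j)) := by
      refine (((ex_good ε hδ).meas N).comp measurable_snd).mul ?_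
      refine Finset.measurable_prod _ fun j _ => ?_
      exact (cut_meas2 ε hδ).comp
        (measurable_fst.prodMk ((measurable_pi_apply j).comp measurable_snd))
    refine (hm₁.comp measurable_fst).mul (((hm₂.comp measurable_fst).mul hp).add (Measurable.mul ?_ hp))
    exact ((Good.sum hm₂ hB₂).meas N).comp measurable_snd
  · intro N w X
    rw [← add_mul, abs_mul, abs_mul, abs_mul, Finset.abs_prod]
    have h2 : ∏ j, |cut δ ε w (X j)| ≤ 1 :=
      Finset.prod_le_one (fun _ _ => abs_nonneg _) fun j _ => (unit01_cut ε hδ w).abs_le _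
    have h3 : 0 ≤ ∏ j, |cut δ ε w (X j)| := Finset.prod_nonneg fun _ _ => abs_nonneg _
    have h4 : |ex δ ε X| ≤ 1 := by
      rw [abs_of_nonneg (ex_mem δ ε X).1]; exact (ex_mem δ ε X).2
    have h5 : |h₂ w + ∑ j, h₂ (X j)| ≤ B₂ * 2 ^ N := by
      calc _ ≤ |h₂ w| + ∑ j, |h₂ (X j)| :=
            (abs_add_le _ _).trans (add_le_add le_rfl (Finset.abs_sum_le_sum_abs _ _))
        _ ≤ B₂ + ∑ _j : Fin N, B₂ := add_le_add (hB₂ w) (Finset.sum_le_sum fun _ _ => hB₂ _)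
        _ = B₂ * (N + 1) := by simp; ring
        _ ≤ _ := by
          gcongr
          exact_mod_cast (Nat.lt_two_pow_self (n := N))
    rw [mul_assoc]
    refine mul_le_mul (hB₁ w) ?_ (by positivity) h0₁
    calc _ ≤ (B₂ * 2 ^ N) * 1 := by
          refine mul_le_mul h5 (mul_le_one₀ h4 h3 h2) (by positivity) (by positivity)
      _ = _ := mul_one _
  · intro X; simp
  · intro N X
    rw [mul_left_comm, Finset.sum_mul]
    refine Finset.sum_congr rfl fun i _ => ?_
    rw [ex_succ δ ε hs X i, Fin.sum_univ_succAbove (fun j => h₂ (X j)) i]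
    simp only [Fin.removeNth]
    ring

theorem cov_bound (hδ : Measurable (Function.uncurry δ)) (hs : ∀ x y, δ x y = δ y x)
    (htri : ∀ x y w, δ x w ≤ δ x y + δ y w) (hε : 0 ≤ ε) (hz : 0 < z)
    {β : ℝ} (hβ0 : 0 ≤ β) (hβ : ∀ x, ν.real {y | δ x y ≤ ε} ≤ β) (k : ℕ)
    {γ : ℝ} (hγ : ∀ x, ν.real {y | δ x y ≤ (k + 2) * ε} ≤ γ)
    {h₁ h₂ : E → ℝ} (hm₁ : Measurable h₁) (hm₂ : Measurable h₂) {B₁ B₂ : ℝ}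
    (hB₁ : ∀ x, |h₁ x| ≤ B₁) (hB₂ : ∀ x, |h₂ x| ≤ B₂) (h0₁ : 0 ≤ B₁) (h0₂ : 0 ≤ B₂) :
    |z⁻¹ * (P ν z (fun _ X => ex δ ε X * ((∑ i, h₁ (X i)) * ∑ i, h₂ (X i))) /
        W δ ε ν z (fun _ => 1) -
      (P ν z (fun _ X => ex δ ε X * ∑ i, h₁ (X i)) / W δ ε ν z (fun _ => 1)) *
      (P ν z (fun _ X => ex δ ε X * ∑ i, h₂ (X i)) / W δ ε ν z (fun _ => 1))) -
      ∫ w, h₁ w * h₂ w ∂ν| ≤ B₁ * B₂ * (z * β + z * ((z * β) ^ k + γ)) := by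
  have hW := W_pos ν ε hδ hz.le (unit01_one (E := E))
  obtain ⟨i12, e12⟩ := two_point ν ε hδ hs hz.le hm₁ hm₂ hB₁ hB₂ h0₁ h0₂
  obtain ⟨i1, e1⟩ := one_point ν ε hδ hs hz.le hm₁ hB₁
  obtain ⟨i2, e2⟩ := one_point ν ε hδ hs hz.le hm₂ hB₂
  rw [e12, e1, e2, mul_div_cancel_left₀ _ hW.ne', mul_div_cancel_left₀ _ hW.ne',
    mul_div_cancel_left₀ _ hW.ne']
  set I2 := ∫ w, h₂ w * Q δ ε ν z (fun _ => 1) w ∂ν with hI2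
  have i0 : Integrable (fun w => h₁ w * h₂ w) ν :=
    Integrable.of_bound (hm₁.mul hm₂).aestronglyMeasurable (B₁ * B₂)
      (Filter.Eventually.of_forall fun w => by
        rw [norm_mul]; exact mul_le_mul (hB₁ w) (hB₂ w) (norm_nonneg _) h0₁)
  have key : ∀ w, |(∫ w', h₂ w' * (cut δ ε w w' * Q δ ε ν z (cut δ ε w) w') ∂ν) - I2| ≤
      B₂ * ((z * β) ^ k + γ) := by
    intro w
    have i3 := (one_point_cut ν ε hδ hs hz.le (unit01_cut ε hδ w) hm₂ hB₂).1
    rw [hI2, ← integral_sub i3 i2]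
    have hms : MeasurableSet {y | δ w y ≤ (k + 2) * ε} :=
      measurableSet_le (hδ.comp measurable_prodMk_left) measurable_const
    have ii : Integrable (fun w' => (z * β) ^ k + Set.indicator {y | δ w y ≤ (k + 2) * ε} (1 : E → ℝ) w') ν :=
      (integrable_const _).add ((integrable_indicator_iff hms).2 (integrable_const (1 : ℝ)).integrableOn)
    have hle : ∀ w', ‖h₂ w' * (cut δ ε w w' * Q δ ε ν z (cut δ ε w) w') -
        h₂ w' * Q δ ε ν z (fun _ => 1) w'‖ ≤
        B₂ * ((z * β) ^ k + Set.indicator {y | δ w y ≤ (k + 2) * ε} (1 : E → ℝ) w') := by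
      intro w'
      rw [← mul_sub, norm_mul]
      refine mul_le_mul (hB₂ w') ?_ (norm_nonneg _) h0₂
      have hq1 := Q_mem ν ε hδ hz.le (unit01_one (E := E)) w'
      have hq2 := Q_mem ν ε hδ hz.le (unit01_cut ε hδ w) w'
      have hpk : 0 ≤ (z * β) ^ k := by positivity
      have hk : (0 : ℝ) ≤ k := Nat.cast_nonneg k
      by_cases hw : δ w w' ≤ (k + 2) * ε
      · rw [Set.indicator_of_mem (show w' ∈ {y | δ w y ≤ (k + 2) * ε} from hw), Pi.one_apply]
        have hc := cut_mem δ ε w w'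
        have h1 : 0 ≤ cut δ ε w w' * Q δ ε ν z (cut δ ε w) w' := mul_nonneg hc.1 hq2.1.le
        have h2 : cut δ ε w w' * Q δ ε ν z (cut δ ε w) w' ≤ 1 := mul_le_one₀ hc.2 hq2.1.le hq2.2
        rw [Real.norm_eq_abs, abs_le]
        constructor <;> linarith [hq1.1, hq1.2]
      · rw [Set.indicator_of_notMem (show w' ∉ {y | δ w y ≤ (k + 2) * ε} from hw), add_zero]
        have hw := not_le.1 hw
        have hc1 : ∀ y, ε < δ w y → cut δ ε w y = 1 := fun y hy => by simp [cut, hy]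
        rw [hc1 w' (by nlinarith), one_mul]
        refine decay ν ε hδ hs htri hε hz.le hβ0 hβ k w' _ _ (unit01_cut ε hδ w) unit01_one ?_
        intro y hy
        refine hc1 y ?_
        have := htri w y w'
        rw [hs y w'] at this
        nlinarith
    refine (norm_integral_le_of_norm_le (ii.const_mul B₂) (Filter.Eventually.of_forall hle)).trans ?_
    have ij : Integrable (Set.indicator {y | δ w y ≤ (k + 2) * ε} (1 : E → ℝ)) ν :=
      (integrable_indicator_iff hms).2 (integrable_const (1 : ℝ)).integrableOn
    rw [integral_const_mul, integral_add (integrable_const _) ij,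
      integral_indicator_one hms]
    refine mul_le_mul_of_nonneg_left ?_ h0₂
    have := hγ w
    simpa using this
  have e : z⁻¹ * ((z * ∫ w, h₁ w * Q δ ε ν z (fun _ => 1) w * (h₂ w + z * ∫ w', h₂ w' *
      (cut δ ε w w' * Q δ ε ν z (cut δ ε w) w') ∂ν) ∂ν) -
      (z * ∫ w, h₁ w * Q δ ε ν z (fun _ => 1) w ∂ν) * (z * I2)) - ∫ w, h₁ w * h₂ w ∂ν =
      ∫ w, (h₁ w * Q δ ε ν z (fun _ => 1) w * (h₂ w + z * ∫ w', h₂ w' *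
      (cut δ ε w w' * Q δ ε ν z (cut δ ε w) w') ∂ν) -
        h₁ w * Q δ ε ν z (fun _ => 1) w * (z * I2)) - h₁ w * h₂ w ∂ν := by
    have i4 := i1.mul_const (z * I2)
    have i5 : Integrable (fun w => h₁ w * Q δ ε ν z (fun _ => 1) w * (h₂ w + z * ∫ w', h₂ w' *
      (cut δ ε w w' * Q δ ε ν z (cut δ ε w) w') ∂ν) -
        h₁ w * Q δ ε ν z (fun _ => 1) w * (z * I2)) ν := i12.sub i4
    rw [integral_sub i5 i0, integral_sub i12 i4, integral_mul_const]
    field_simp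
  rw [e]
  have := norm_integral_le_of_norm_le_const (μ := ν) (C := B₁ * B₂ * (z * β + z * ((z * β) ^ k + γ)))
    (f := fun w => (h₁ w * Q δ ε ν z (fun _ => 1) w * (h₂ w + z * ∫ w', h₂ w' *
      (cut δ ε w w' * Q δ ε ν z (cut δ ε w) w') ∂ν) -
        h₁ w * Q δ ε ν z (fun _ => 1) w * (z * I2)) - h₁ w * h₂ w)
    (Filter.Eventually.of_forall fun w => ?_)
  · simpa using this
  have hq := Q_mem ν ε hδ hz.le (unit01_one (E := E)) w
  have hq1 := one_sub_Q ν ε hδ hs hz.le hβ (unit01_one (E := E)) w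
  have hk := key w
  set J := ∫ w', h₂ w' * (cut δ ε w w' * Q δ ε ν z (cut δ ε w) w') ∂ν
  set q := Q δ ε ν z (fun _ => 1) w
  have : h₁ w * q * (h₂ w + z * J) - h₁ w * q * (z * I2) - h₁ w * h₂ w =
      h₁ w * (q * (z * (J - I2)) - h₂ w * (1 - q)) := by ring
  rw [this, norm_mul, mul_assoc]
  refine mul_le_mul (hB₁ w) ?_ (norm_nonneg _) h0₁
  refine (norm_sub_le _ _).trans ?_
  rw [norm_mul, norm_mul, norm_mul, Real.norm_of_nonneg hq.1.le, Real.norm_of_nonneg hz.le,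
    Real.norm_of_nonneg (by linarith [hq.2] : 0 ≤ 1 - q)]
  have a1 : q * (z * ‖J - I2‖) ≤ 1 * (z * (B₂ * ((z * β) ^ k + γ))) :=
    mul_le_mul hq.2 (mul_le_mul_of_nonneg_left hk hz.le) (by positivity) zero_le_one
  have a2 : ‖h₂ w‖ * (1 - q) ≤ B₂ * (z * β) :=
    mul_le_mul (hB₂ w) hq1 (by linarith [hq.2]) h0₂
  calc _ ≤ _ := add_le_add a1 a2
    _ = _ := by ring

end abstract_part

section concrete_part

theorem pi_withDensity_ofReal {E : Type*} [MeasurableSpace E] (μ : Measure E) [SigmaFinite μ]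
    {f : E → ℝ} (hf : Integrable f μ) (h0 : ∀ x, 0 ≤ f x)
    [SigmaFinite (μ.withDensity fun x => ENNReal.ofReal (f x))] (N : ℕ) :
    (Measure.pi fun _ : Fin N => μ.withDensity fun x => ENNReal.ofReal (f x)) =
      (Measure.pi fun _ : Fin N => μ).withDensity fun X => ENNReal.ofReal (∏ i, f (X i)) := by
  refine Measure.pi_eq fun s hs => ?_
  rw [withDensity_apply _ (MeasurableSet.univ_pi hs), Measure.restrict_pi_pi]
  have hi : ∀ i, Integrable f (μ.restrict (s i)) := fun i => hf.restrict
  rw [← ofReal_integral_eq_lintegral_ofReal (Integrable.fintype_prod (f := fun _ => f) hi)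
    (ae_of_all _ fun X => Finset.prod_nonneg fun i _ => h0 _),
    integral_fintype_prod_eq_prod (fun _ => f),
    ENNReal.ofReal_prod_of_nonneg fun i _ => integral_nonneg h0]
  refine Finset.prod_congr rfl fun i _ => ?_
  rw [withDensity_apply _ (hs i), ofReal_integral_eq_lintegral_ofReal (hi i) (ae_of_all _ h0)]

variable {d : ℕ}

theorem maxw_nonneg (v : EuclideanSpace ℝ (Fin d)) : 0 ≤ maxwellian v := by
  unfold maxwellian; positivity

theorem maxw_cont : Continuous (maxwellian : EuclideanSpace ℝ (Fin d) → ℝ) := by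
  unfold maxwellian; fun_prop

theorem maxw_integral : ∫ v : EuclideanSpace ℝ (Fin d), maxwellian v = 1 := by
  unfold maxwellian
  rw [integral_const_mul]
  have h := GaussianFourier.integral_rexp_neg_mul_sq_norm (V := EuclideanSpace ℝ (Fin d))
    (b := 1 / 2) (by norm_num)
  have h2 : (fun v : EuclideanSpace ℝ (Fin d) => Real.exp (-‖v‖ ^ 2 / 2)) =
      fun v => Real.exp (-(1 / 2) * ‖v‖ ^ 2) := by
    funext v; congr 1; ring
  rw [h2, h, finrank_euclideanSpace, Fintype.card_fin, show π / (1 / 2) = 2 * π by ring,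
    ← Real.rpow_add (by positivity), show -(d : ℝ) / 2 + d / 2 = 0 by ring, Real.rpow_zero]

theorem maxw_integrable : Integrable (maxwellian : EuclideanSpace ℝ (Fin d) → ℝ) := by
  by_contra h
  have := maxw_integral (d := d)
  rw [integral_undef h] at this
  exact zero_ne_one this

/-- velocity law -/
noncomputable def gam (d : ℕ) : Measure (EuclideanSpace ℝ (Fin d)) :=
  volume.withDensity fun v => ENNReal.ofReal (maxwellian v)

instance gam_prob : IsProbabilityMeasure (gam d) := by
  refine ⟨?_⟩
  rw [gam, withDensity_apply _ MeasurableSet.univ, Measure.restrict_univ,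
    ← ofReal_integral_eq_lintegral_ofReal maxw_integrable (ae_of_all _ maxw_nonneg), maxw_integral,
    ENNReal.ofReal_one]

instance circ_prob : IsProbabilityMeasure (volume : Measure (AddCircle (1 : ℝ))) :=
  ⟨by simp [AddCircle.measure_univ]⟩

/-- one-particle law -/
noncomputable def nu (d : ℕ) : Measure (Phase d) := (volume : Measure (Torus d)).prod (gam d)

instance nu_prob : IsProbabilityMeasure (nu d) := by unfold nu; infer_instance

theorem nu_eq : nu d = (volume : Measure (Phase d)).withDensity
    fun z => ENNReal.ofReal (maxwellian z.2) := by
  unfold nu gam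
  rw [prod_withDensity_right (by exact (maxw_cont.measurable).ennreal_ofReal)]
  rfl

theorem nu_fst : MeasurePreserving Prod.fst (nu d) (volume : Measure (Torus d)) :=
  measurePreserving_fst

theorem maxw_snd_integrable : Integrable (fun z : Phase d => maxwellian z.2) := by
  have := (maxw_integrable (d := d)).comp_snd (volume : Measure (Torus d))
  exact this

theorem int_nu (g : Phase d → ℝ) : ∫ z, g z ∂(nu d) = ∫ z : Phase d, g z * maxwellian z.2 := by
  rw [nu_eq, integral_withDensity_eq_integral_toReal_smul
    (by exact ((maxw_cont.comp continuous_snd).measurable).ennreal_ofReal)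
    (ae_of_all _ fun _ => ENNReal.ofReal_lt_top)]
  refine integral_congr_ae (ae_of_all _ fun z => ?_)
  simp [ENNReal.toReal_ofReal (maxw_nonneg z.2), mul_comm]

theorem int_pi_nu {N : ℕ} (g : (Fin N → Phase d) → ℝ) :
    ∫ Z, g Z ∂(Measure.pi fun _ : Fin N => nu d) =
      ∫ Z : Fin N → Phase d, g Z * ∏ i, maxwellian (Z i).2 := by
  have hp : IsProbabilityMeasure ((volume : Measure (Phase d)).withDensity
    fun z => ENNReal.ofReal (maxwellian z.2)) := by rw [← nu_eq]; infer_instance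
  have hms : Measurable fun z : Phase d => maxwellian z.2 :=
    (maxw_cont.comp continuous_snd).measurable
  have hmp : Measurable fun Z : Fin N → Phase d => ENNReal.ofReal (∏ i, maxwellian (Z i).2) :=
    Measurable.ennreal_ofReal
      (Finset.measurable_prod _ fun i _ => hms.comp (measurable_pi_apply i))
  rw [nu_eq, pi_withDensity_ofReal _ maxw_snd_integrable (fun z => maxw_nonneg _),
    integral_withDensity_eq_integral_toReal_smul
    hmp (ae_of_all _ fun _ => ENNReal.ofReal_lt_top)]
  refine integral_congr_ae (ae_of_all _ fun z => ?_)
  simp only [smul_eq_mul]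
  rw [ENNReal.toReal_ofReal (Finset.prod_nonneg fun i _ => maxw_nonneg _), mul_comm]

theorem td_cont : Continuous (Function.uncurry (torusDist : Torus d → Torus d → ℝ)) := by
  unfold torusDist Function.uncurry; fun_prop

theorem td_symm (x y : Torus d) : torusDist x y = torusDist y x := by
  unfold torusDist; simp [dist_comm]

theorem td_tri (x y w : Torus d) : torusDist x w ≤ torusDist x y + torusDist y w := by
  have key : ∀ x y : Torus d, torusDist x y =
      ‖(WithLp.toLp 2 (fun i => dist (x i) (y i)) : EuclideanSpace ℝ (Fin d))‖ := by
    intro x y; rw [EuclideanSpace.norm_eq]; simp [torusDist]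
  rw [key x y, key y w]
  refine le_trans ?_ (norm_add_le _ _)
  rw [EuclideanSpace.norm_eq]
  unfold torusDist
  refine Real.sqrt_le_sqrt (Finset.sum_le_sum fun i _ => ?_)
  simp only [PiLp.add_apply, Real.norm_eq_abs, sq_abs]
  exact pow_le_pow_left₀ dist_nonneg (dist_triangle _ _ _) 2

theorem td_coord (x y : Torus d) (i : Fin d) : dist (x i) (y i) ≤ torusDist x y := by
  unfold torusDist
  refine Real.le_sqrt_of_sq_le ?_
  exact Finset.single_le_sum (f := fun i => dist (x i) (y i) ^ 2) (fun _ _ => sq_nonneg _)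
    (Finset.mem_univ i)

/-- position distance on phase space -/
noncomputable def del (z z' : Phase d) : ℝ := torusDist z.1 z'.1

theorem del_meas : Measurable (Function.uncurry (del : Phase d → Phase d → ℝ)) := by
  have : Continuous (fun p : Phase d × Phase d => torusDist p.1.1 p.2.1) :=
    td_cont.comp (g := Function.uncurry (torusDist : Torus d → Torus d → ℝ))
      (f := fun p : Phase d × Phase d => (p.1.1, p.2.1)) (by fun_prop)
  exact this.measurable

theorem ball_bound (x : Phase d) {r : ℝ} (hr : 0 ≤ r) :
    (nu d).real {y | del x y ≤ r} ≤ (2 * r) ^ d := by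
  have h1 : {y : Phase d | del x y ≤ r} ⊆
      Prod.fst ⁻¹' (Set.univ.pi fun i => Metric.closedBall (x.1 i) r) := by
    intro y hy i _
    rw [Metric.mem_closedBall, dist_comm]
    exact (td_coord _ _ i).trans hy
  have h2 : (nu d) (Prod.fst ⁻¹' (Set.univ.pi fun i => Metric.closedBall (x.1 i) r)) ≤
      ENNReal.ofReal ((2 * r) ^ d) := by
    rw [nu_fst.measure_preimage
      (MeasurableSet.univ_pi fun i => Metric.isClosed_closedBall.measurableSet).nullMeasurableSet,
      volume_pi_pi]
    simp only [AddCircle.volume_closedBall]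
    calc ∏ _i : Fin d, ENNReal.ofReal (min 1 (2 * r)) ≤ ∏ _i : Fin d, ENNReal.ofReal (2 * r) :=
          Finset.prod_le_prod' fun _ _ => ENNReal.ofReal_le_ofReal (min_le_right _ _)
      _ = _ := by rw [Finset.prod_const, Finset.card_univ, Fintype.card_fin,
                    ENNReal.ofReal_pow (by positivity)]
  exact ENNReal.toReal_le_of_le_ofReal (by positivity) ((measure_mono h1).trans h2)

theorem exclInd_eq (ε : ℝ) {N : ℕ} (Z : Fin N → Phase d) :
    exclInd ε (fun i => (Z i).1) = ex del ε Z := rfl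

theorem partitionZ_eq (ε : ℝ) : partitionZ d ε = W del ε (nu d) (muBG d ε) (fun _ => 1) := by
  unfold partitionZ W P
  congr 1; ext N
  congr 1
  have hmp : MeasurePreserving (fun (Z : Fin N → Phase d) i => (Z i).1)
      (Measure.pi fun _ : Fin N => nu d) (Measure.pi fun _ : Fin N => (volume : Measure (Torus d))) :=
    measurePreserving_pi _ _ fun _ => nu_fst
  have hm : Measurable (fun X : Fin N → Torus d => exclInd ε X) :=
    (ex_good (δ := (torusDist : Torus d → Torus d → ℝ)) ε td_cont.measurable).meas N
  have h1 : ∫ X : Fin N → Torus d, exclInd ε X =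
      ∫ X, exclInd ε X ∂(Measure.pi fun _ : Fin N => (volume : Measure (Torus d))) := rfl
  rw [h1, ← hmp.map_eq, integral_map hmp.aemeasurable hm.aestronglyMeasurable]
  simp only [Finset.prod_const_one, mul_one]
  rfl

theorem gceExp_eq (ε : ℝ) (F : (N : ℕ) → (Fin N → Phase d) → ℝ) :
    gceExp d ε F = P (nu d) (muBG d ε) (fun N Z => ex del ε Z * F N Z) /
      W del ε (nu d) (muBG d ε) (fun _ => 1) := by
  unfold gceExp
  rw [partitionZ_eq, div_eq_inv_mul]
  unfold P
  congr 2; ext N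
  rw [int_pi_nu]
  congr 2; ext Z
  rw [exclInd_eq]; ring

theorem gce_cov (ε : ℝ) (hm : 0 < muBG d ε) {h₁ h₂ : Phase d → ℝ} (hm₁ : Measurable h₁)
    (hm₂ : Measurable h₂) {B₁ B₂ : ℝ} (hB₁ : ∀ x, |h₁ x| ≤ B₁) (hB₂ : ∀ x, |h₂ x| ≤ B₂) :
    gceExp d ε (fun N Z => fluctField d ε h₁ N Z * fluctField d ε h₂ N Z) =
    (muBG d ε)⁻¹ * (P (nu d) (muBG d ε)
        (fun _ X => ex del ε X * ((∑ i, h₁ (X i)) * ∑ i, h₂ (X i))) /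
        W del ε (nu d) (muBG d ε) (fun _ => 1) -
      (P (nu d) (muBG d ε) (fun _ X => ex del ε X * ∑ i, h₁ (X i)) /
        W del ε (nu d) (muBG d ε) (fun _ => 1)) *
      (P (nu d) (muBG d ε) (fun _ X => ex del ε X * ∑ i, h₂ (X i)) /
        W del ε (nu d) (muBG d ε) (fun _ => 1))) := by
  have hW := W_pos (nu d) ε del_meas hm.le (unit01_one (E := Phase d))
  have hX := ex_good (δ := (del : Phase d → Phase d → ℝ)) ε del_meas
  have g1 := hX.mul (Good.sum hm₁ hB₁)
  have g2 := hX.mul (Good.sum hm₂ hB₂)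
  have g12 := hX.mul ((Good.sum hm₁ hB₁).mul (Good.sum hm₂ hB₂))
  have e0 : P (nu d) (muBG d ε) (fun _ X => ex del ε X) =
      W del ε (nu d) (muBG d ε) (fun _ => 1) := by
    unfold W; simp
  have ee : ∀ h : Phase d → ℝ, gceExp d ε (fun M Z => empDens ε h M Z) =
      (muBG d ε)⁻¹ * (P (nu d) (muBG d ε) (fun _ X => ex del ε X * ∑ i, h (X i)) /
        W del ε (nu d) (muBG d ε) (fun _ => 1)) := by
    intro h
    rw [gceExp_eq, ← mul_div_assoc, ← P_const_mul]
    congr 2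
    funext N X
    simp only [empDens]; ring
  have key : ∀ a b : ℝ, P (nu d) (muBG d ε) (fun N Z => ex del ε Z *
      (√(muBG d ε) * (empDens ε h₁ N Z - (muBG d ε)⁻¹ * a) *
        (√(muBG d ε) * (empDens ε h₂ N Z - (muBG d ε)⁻¹ * b)))) =
      (muBG d ε)⁻¹ * (P (nu d) (muBG d ε)
        (fun _ X => ex del ε X * ((∑ i, h₁ (X i)) * ∑ i, h₂ (X i))) +
      (-b) * P (nu d) (muBG d ε) (fun _ X => ex del ε X * ∑ i, h₁ (X i)) +
      ((-a) * P (nu d) (muBG d ε) (fun _ X => ex del ε X * ∑ i, h₂ (X i)) +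
        a * b * P (nu d) (muBG d ε) (fun _ X => ex del ε X))) := by
    intro a b
    have s := Real.mul_self_sqrt hm.le
    rw [← P_const_mul (nu d) (-b), ← P_const_mul (nu d) (-a),
      ← P_const_mul (nu d) (a * b),
      ← P_add (nu d) hm.le g12 ((Good.const (-b)).mul g1),
      ← P_add (nu d) hm.le ((Good.const (-a)).mul g2) ((Good.const (a * b)).mul hX),
      ← P_add (nu d) hm.le (g12.add ((Good.const (-b)).mul g1))
        (((Good.const (-a)).mul g2).add ((Good.const (a * b)).mul hX)),
      ← P_const_mul]
    congr 1
    funext N Z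
    simp only [empDens]
    generalize ∑ i, h₁ (Z i) = S1
    generalize ∑ i, h₂ (Z i) = S2
    have h3 : ∀ a b x : ℝ, x * (√(muBG d ε) * a * (√(muBG d ε) * b)) =
        x * ((√(muBG d ε) * √(muBG d ε)) * (a * b)) := by
      intros; ring
    rw [h3, s]
    field_simp
    ring
  rw [gceExp_eq]
  simp only [fluctField, ee]
  rw [key, e0]
  field_simp
  ring

theorem limit_bound (hd : 2 ≤ d) {h₁ h₂ : Phase d → ℝ} (hm₁ : Measurable h₁)
    (hm₂ : Measurable h₂) {B₁ B₂ : ℝ} (hB₁ : ∀ x, |h₁ x| ≤ B₁) (hB₂ : ∀ x, |h₂ x| ≤ B₂)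
    (h0₁ : 0 ≤ B₁) (h0₂ : 0 ≤ B₂) {ε : ℝ} (hε : 0 < ε) :
    |gceExp d ε (fun N Z => fluctField d ε h₁ N Z * fluctField d ε h₂ N Z) -
      ∫ z : Phase d, h₁ z * h₂ z * maxwellian z.2| ≤
    B₁ * B₂ * (2 ^ d + ((2 ^ d) ^ d + (2 * (d + 2)) ^ d)) * ε := by
  obtain ⟨n, rfl⟩ : ∃ n, d = n + 2 := ⟨d - 2, by omega⟩
  have hm : 0 < muBG (n + 2) ε := by unfold muBG; positivity
  rw [gce_cov ε hm hm₁ hm₂ hB₁ hB₂, ← int_nu]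
  refine (cov_bound (nu (n + 2)) ε del_meas (fun x y => td_symm _ _) (fun x y w => td_tri _ _ _)
    hε.le hm (β := (2 * ε) ^ (n + 2)) (by positivity) (fun x => ball_bound x hε.le) (n + 2)
    (γ := (2 * (((n + 2 : ℕ) + 2 : ℝ) * ε)) ^ (n + 2)) (fun x => ball_bound x (by positivity))
    hm₁ hm₂ hB₁ hB₂ h0₁ h0₂).trans (le_of_eq ?_)
  have e1 : muBG (n + 2) ε * (2 * ε) ^ (n + 2) = 2 ^ (n + 2) * ε := by
    unfold muBG
    rw [show n + 2 - 1 = n + 1 from rfl, mul_pow, pow_succ ε (n + 1)]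
    field_simp
  have e2 : muBG (n + 2) ε * (2 ^ (n + 2) * ε) ^ (n + 2) = (2 ^ (n + 2)) ^ (n + 2) * ε := by
    unfold muBG
    rw [show n + 2 - 1 = n + 1 from rfl, mul_pow _ ε, pow_succ ε (n + 1)]
    field_simp
  have e3 : muBG (n + 2) ε * (2 * (((n + 2 : ℕ) + 2 : ℝ) * ε)) ^ (n + 2) =
      (2 * ((n + 2 : ℕ) + 2 : ℝ)) ^ (n + 2) * ε := by
    unfold muBG
    rw [show n + 2 - 1 = n + 1 from rfl, ← mul_assoc, mul_pow _ ε, pow_succ ε (n + 1)]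
    field_simp
  rw [e1, mul_add (muBG (n + 2) ε), e2, e3]
  ring

end concrete_part

end HS

/-- Convergence of the equal-time covariance of the equilibrium fluctuation field in the
Boltzmann–Grad limit `ε → 0⁺`:
`𝔼^eq_ε[ζ^{ε,eq}(h⁽¹⁾) ζ^{ε,eq}(h⁽²⁾)] → ∫ h⁽¹⁾(z) h⁽²⁾(z) 𝓜(v) dz`. -/
theorem covariance_convergence (d : ℕ) (hd : 2 ≤ d)
    (h₁ h₂ : Phase d → ℝ) (hm₁ : Measurable h₁) (hm₂ : Measurable h₂)
    (hb₁ : ∃ B : ℝ, ∀ z, |h₁ z| ≤ B) (hb₂ : ∃ B : ℝ, ∀ z, |h₂ z| ≤ B) :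
    Filter.Tendsto
      (fun ε : ℝ =>
        gceExp d ε (fun N Z => fluctField d ε h₁ N Z * fluctField d ε h₂ N Z))
      (nhdsWithin 0 (Set.Ioi 0))
      (nhds (∫ z : Phase d, h₁ z * h₂ z * maxwellian z.2)) := by
  obtain ⟨B₁, hB₁⟩ := hb₁
  obtain ⟨B₂, hB₂⟩ := hb₂
  have hB₁' : ∀ z, |h₁ z| ≤ |B₁| := fun z => (hB₁ z).trans (le_abs_self _)
  have hB₂' : ∀ z, |h₂ z| ≤ |B₂| := fun z => (hB₂ z).trans (le_abs_self _)
  rw [tendsto_iff_dist_tendsto_zero]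
  refine squeeze_zero' (Filter.Eventually.of_forall fun _ => dist_nonneg)
    (g := fun ε => |B₁| * |B₂| * (2 ^ d + ((2 ^ d) ^ d + (2 * (d + 2)) ^ d)) * ε) ?_ ?_
  · filter_upwards [self_mem_nhdsWithin] with ε hε
    rw [Real.dist_eq]
    exact HS.limit_bound hd hm₁ hm₂ hB₁' hB₂' (abs_nonneg _) (abs_nonneg _) hε
  · have : Filter.Tendsto (fun ε : ℝ =>
        |B₁| * |B₂| * (2 ^ d + ((2 ^ d) ^ d + (2 * (d + 2)) ^ d)) * ε) (nhds 0) (nhds 0) := by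
      have h := (continuous_const_mul
        (|B₁| * |B₂| * (2 ^ d + ((2 ^ d) ^ d + (2 * ((d : ℝ) + 2)) ^ d)))).tendsto (0 : ℝ)
      simpa using h
    exact this.mono_left nhdsWithin_le_nhds
end
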